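/- arXiv:1409.6433 — 2 statements merged into one kernel-verified Lean document; each statement's English description precedes it below -/
import Mathlib

section
/- Let d ≥ 2 and define, for ψ ∈ C_c^∞(ℝ^d, ℂ), l[ψ] := ∫_{ℝ^d} |∇ψ(y)|² dy − ((d−2)/2)² ∫_{ℝ^d} |ψ(y)|²/|y|² dy + (1/16) ∫_{ℝ^d} |y|² |ψ(y)|² dy. Then the infimum of l[ψ] / ∫_{ℝ^d} |ψ|² dy over all nonzero ψ ∈ C_c^∞(ℝ^d, ℂ) equals 1/2; that is, l[ψ] ≥ (1/2) ∫ |ψ|² for every ψ ∈ C_c^∞(ℝ^d, ℂ), and for every ε > 0 there exists ψ ∈ C_c^∞(ℝ^d, ℂ), ψ ≠ 0, with l[ψ] < (1/2 + ε) ∫ |ψ|². -/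
open MeasureTheory Real

/-- The quadratic form `l[ψ]` of the operator `−Δ − c_d/|y|² + |y|²/16`. -/
noncomputable def lForm (d : ℕ) (ψ : EuclideanSpace ℝ (Fin d) → ℂ) : ℝ :=
  (∫ y, ∑ j, ‖fderiv ℝ ψ y (EuclideanSpace.single j (1:ℝ))‖ ^ 2)
  - ((d - 2 : ℝ)/2)^2 * (∫ y, ‖ψ y‖^2 / ‖y‖^2)
  + (1/16 : ℝ) * ∫ y, ‖y‖^2 * ‖ψ y‖^2

open Filter Topology

/-- The radial factor of the regularized vector field `y ↦ (a / (‖y‖² + δ) + 1/4) y`. -/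
noncomputable def radialFactor {d : ℕ} (a δ : ℝ) (y : EuclideanSpace ℝ (Fin d)) : ℝ :=
  a / (‖y‖ ^ 2 + δ) + 1 / 4

/-- Divergence minus squared length of the vector field `y ↦ radialFactor a δ y • y`. -/
noncomputable def fieldPotential {d : ℕ} (a δ : ℝ) (y : EuclideanSpace ℝ (Fin d)) : ℝ :=
  d * radialFactor a δ y - 2 * a * ‖y‖ ^ 2 / (‖y‖ ^ 2 + δ) ^ 2
    - radialFactor a δ y ^ 2 * ‖y‖ ^ 2

lemma fieldPotential_eq {d : ℕ} (a : ℝ) {δ : ℝ} (hδ : 0 < δ) (y : EuclideanSpace ℝ (Fin d)) :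
    fieldPotential a δ y = (a * (d - 2) - a ^ 2) / (‖y‖ ^ 2 + δ)
      + δ / (‖y‖ ^ 2 + δ) * ((2 * a + a ^ 2) / (‖y‖ ^ 2 + δ) + a / 2)
      + (d / 4 - a / 2) - ‖y‖ ^ 2 / 16 := by
  have h : ‖y‖ ^ 2 + δ ≠ 0 := by positivity
  unfold fieldPotential radialFactor
  field_simp
  ring

lemma contDiff_radialFactor {d : ℕ} (a : ℝ) {δ : ℝ} (hδ : 0 < δ) :
    ContDiff ℝ (⊤ : ℕ∞) (radialFactor a δ : EuclideanSpace ℝ (Fin d) → ℝ) := by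
  unfold radialFactor
  refine (contDiff_const.div ((contDiff_norm_sq ℝ).add contDiff_const) fun y => ?_).add
    contDiff_const
  positivity

lemma continuous_fieldPotential {d : ℕ} (a : ℝ) {δ : ℝ} (hδ : 0 < δ) :
    Continuous (fieldPotential a δ : EuclideanSpace ℝ (Fin d) → ℝ) := by
  have h := (contDiff_radialFactor (d := d) a hδ).continuous
  have h' : ∀ y : EuclideanSpace ℝ (Fin d), (‖y‖ ^ 2 + δ) ^ 2 ≠ 0 := fun y => by positivity
  unfold fieldPotential
  fun_prop (disch := assumption)

lemma hasFDerivAt_radialFactor {d : ℕ} (a : ℝ) {δ : ℝ} (hδ : 0 < δ)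
    (y : EuclideanSpace ℝ (Fin d)) :
    HasFDerivAt (radialFactor a δ) ((-(2 * a) / (‖y‖ ^ 2 + δ) ^ 2) • innerSL ℝ y) y := by
  have h : ‖y‖ ^ 2 + δ ≠ 0 := by positivity
  have h1 : HasFDerivAt (fun z : EuclideanSpace ℝ (Fin d) => ‖z‖ ^ 2 + δ)
      (2 • innerSL ℝ y) y :=
    (hasStrictFDerivAt_norm_sq y).hasFDerivAt.add_const δ
  have h2 : HasDerivAt (fun t : ℝ => a / t + 1 / 4) (-a / (‖y‖ ^ 2 + δ) ^ 2) (‖y‖ ^ 2 + δ) := by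
    refine (((hasDerivAt_inv h).const_mul a).add_const (1 / 4)).congr_deriv ?_
    ring
  refine (h2.comp_hasFDerivAt y h1).congr_fderiv ?_
  ext v
  simp
  ring

lemma fderiv_radialFactor_mul_apply {d : ℕ} (a : ℝ) {δ : ℝ} (hδ : 0 < δ)
    (y : EuclideanSpace ℝ (Fin d)) (j : Fin d) :
    fderiv ℝ (fun z : EuclideanSpace ℝ (Fin d) => radialFactor a δ z * z j) y
        (EuclideanSpace.single j (1 : ℝ))
      = radialFactor a δ y - 2 * a * (y j) ^ 2 / (‖y‖ ^ 2 + δ) ^ 2 := by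
  have h1 : HasFDerivAt (fun z : EuclideanSpace ℝ (Fin d) => z j)
      (EuclideanSpace.proj j : EuclideanSpace ℝ (Fin d) →L[ℝ] ℝ) y :=
    (EuclideanSpace.proj j : EuclideanSpace ℝ (Fin d) →L[ℝ] ℝ).hasFDerivAt
  have h2 : HasFDerivAt (fun z : EuclideanSpace ℝ (Fin d) => radialFactor a δ z * z j) _ y :=
    (hasFDerivAt_radialFactor a hδ y).mul h1
  rw [h2.fderiv]
  simp [EuclideanSpace.inner_single_right]
  ring

lemma norm_fderiv_add_smul_sq {E : Type*} [NormedAddCommGroup E] [NormedSpace ℝ E]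
    {ψ : E → ℂ} {y : E} (hψ : DifferentiableAt ℝ ψ y) (v : E) (t : ℝ) :
    ‖fderiv ℝ ψ y v + t • ψ y‖ ^ 2
      = ‖fderiv ℝ ψ y v‖ ^ 2 + t * fderiv ℝ (fun y => ‖ψ y‖ ^ 2) y v + t ^ 2 * ‖ψ y‖ ^ 2 := by
  have h : HasFDerivAt (fun y => ‖ψ y‖ ^ 2) _ y := hψ.hasFDerivAt.norm_sq
  have h' : fderiv ℝ (fun y => ‖ψ y‖ ^ 2) y v = 2 * inner ℝ (ψ y) (fderiv ℝ ψ y v) := by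
    rw [h.fderiv]
    simp
    ring
  rw [h', norm_add_sq_real, real_inner_smul_right, norm_smul, mul_pow, norm_eq_abs, sq_abs,
    real_inner_comm]
  ring

/-- Completing the square for the Dirichlet energy along the regularized vector field. -/
lemma integral_norm_fderiv_sq_eq {d : ℕ} (a : ℝ) {δ : ℝ} (hδ : 0 < δ)
    {ψ : EuclideanSpace ℝ (Fin d) → ℂ} (hψ : ContDiff ℝ (⊤ : ℕ∞) ψ)
    (hc : HasCompactSupport ψ) :
    ∫ y, ∑ j, ‖fderiv ℝ ψ y (EuclideanSpace.single j (1:ℝ))‖ ^ 2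
      = (∫ y, ∑ j, ‖fderiv ℝ ψ y (EuclideanSpace.single j (1:ℝ))
            + (radialFactor a δ y * y j) • ψ y‖ ^ 2)
        + ∫ y, fieldPotential a δ y * ‖ψ y‖ ^ 2 := by
  have hf := contDiff_radialFactor (d := d) a hδ
  have hfj : ∀ j : Fin d, ContDiff ℝ (⊤ : ℕ∞)
      (fun z : EuclideanSpace ℝ (Fin d) => radialFactor a δ z * z j) := fun j =>
    hf.mul (EuclideanSpace.proj j : EuclideanSpace ℝ (Fin d) →L[ℝ] ℝ).contDiff
  have hψd : ContDiff ℝ (⊤ : ℕ∞) (fderiv ℝ ψ) := hψ.fderiv_right (by simp)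
  have hψ2 : ContDiff ℝ (⊤ : ℕ∞) (fun y => ‖ψ y‖ ^ 2) := hψ.norm_sq ℝ
  have hc2 : HasCompactSupport (fun y => ‖ψ y‖ ^ 2) :=
    hc.comp_left (g := fun z : ℂ => ‖z‖ ^ 2) (by simp)
  have hdc : ∀ v, HasCompactSupport (fun y => fderiv ℝ ψ y v) := fun v => hc.fderiv_apply ℝ v
  have hdcont : ∀ v, Continuous (fun y => fderiv ℝ ψ y v) := fun v =>
    hψd.continuous.clm_apply continuous_const
  have hIψ : ∀ g : EuclideanSpace ℝ (Fin d) → ℝ, Continuous g →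
      Integrable (fun y => g y * ‖ψ y‖ ^ 2) := fun g hg =>
    (hg.mul hψ2.continuous).integrable_of_hasCompactSupport hc2.mul_left
  have hIg : ∀ j, Integrable (fun y => (radialFactor a δ y * y j) *
      fderiv ℝ (fun y => ‖ψ y‖ ^ 2) y (EuclideanSpace.single j (1:ℝ))) := fun j =>
    ((hfj j).continuous.mul ((hψ2.continuous_fderiv (by simp)).clm_apply
      continuous_const)).integrable_of_hasCompactSupport (hc2.fderiv_apply ℝ _).mul_left
  have hIdiv : ∀ j : Fin d, Integrable (fun y =>
      fderiv ℝ (fun z : EuclideanSpace ℝ (Fin d) => radialFactor a δ z * z j) y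
        (EuclideanSpace.single j (1 : ℝ)) * ‖ψ y‖ ^ 2) := fun j =>
    hIψ _ (((hfj j).continuous_fderiv (by simp)).clm_apply continuous_const)
  have hparts : ∀ j : Fin d, ∫ y, (radialFactor a δ y * y j) *
      fderiv ℝ (fun y => ‖ψ y‖ ^ 2) y (EuclideanSpace.single j (1:ℝ))
      = - ∫ y, fderiv ℝ (fun z : EuclideanSpace ℝ (Fin d) => radialFactor a δ z * z j) y
        (EuclideanSpace.single j (1 : ℝ)) * ‖ψ y‖ ^ 2 := fun j =>
    integral_mul_fderiv_eq_neg_fderiv_mul_of_integrable (hIdiv j) (hIg j)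
      (hIψ _ (hfj j).continuous) (fun x _ => (hfj j).differentiable (by simp) x)
      (fun x _ => hψ2.differentiable (by simp) x)
  have hIgrad : ∀ j, Integrable (fun y =>
      ‖fderiv ℝ ψ y (EuclideanSpace.single j (1:ℝ))‖ ^ 2) := by
    intro j
    have h1 := (hdcont (EuclideanSpace.single j (1:ℝ))).norm.pow 2
    have h2 := (hdc (EuclideanSpace.single j (1:ℝ))).comp_left (g := fun z : ℂ => ‖z‖ ^ 2)
      (by simp)
    exact h1.integrable_of_hasCompactSupport h2
  have hψdiff : Differentiable ℝ ψ := hψ.differentiable (by simp)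
  have hexp := fun (y : EuclideanSpace ℝ (Fin d)) (j : Fin d) =>
    norm_fderiv_add_smul_sq (hψdiff y) (EuclideanSpace.single j (1:ℝ))
      (radialFactor a δ y * y j)
  have hIsq : ∀ j : Fin d, Integrable (fun y => (radialFactor a δ y * y j) ^ 2 * ‖ψ y‖ ^ 2) :=
    fun j => hIψ _ ((hfj j).continuous.pow 2)
  have hIsum : ∀ j : Fin d, Integrable (fun y =>
      ‖fderiv ℝ ψ y (EuclideanSpace.single j (1:ℝ))‖ ^ 2 + (radialFactor a δ y * y j) *
        fderiv ℝ (fun y => ‖ψ y‖ ^ 2) y (EuclideanSpace.single j (1:ℝ))) :=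
    fun j => (hIgrad j).add (hIg j)
  have hItot : ∀ j : Fin d, Integrable (fun y =>
      ‖fderiv ℝ ψ y (EuclideanSpace.single j (1:ℝ))‖ ^ 2 + (radialFactor a δ y * y j) *
        fderiv ℝ (fun y => ‖ψ y‖ ^ 2) y (EuclideanSpace.single j (1:ℝ))
      + (radialFactor a δ y * y j) ^ 2 * ‖ψ y‖ ^ 2) :=
    fun j => (hIsum j).add (hIsq j)
  have hIsub : ∀ j : Fin d, Integrable (fun y =>
      fderiv ℝ (fun z : EuclideanSpace ℝ (Fin d) => radialFactor a δ z * z j) y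
        (EuclideanSpace.single j (1 : ℝ)) * ‖ψ y‖ ^ 2
      - (radialFactor a δ y * y j) ^ 2 * ‖ψ y‖ ^ 2) :=
    fun j => (hIdiv j).sub (hIsq j)
  simp_rw [hexp]
  rw [integral_finsetSum _ fun j _ => hIgrad j,
    integral_finsetSum _ fun j _ => hItot j]
  have hsplit : ∀ j : Fin d, ∫ y, (‖fderiv ℝ ψ y (EuclideanSpace.single j (1:ℝ))‖ ^ 2
        + (radialFactor a δ y * y j) *
          fderiv ℝ (fun y => ‖ψ y‖ ^ 2) y (EuclideanSpace.single j (1:ℝ))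
        + (radialFactor a δ y * y j) ^ 2 * ‖ψ y‖ ^ 2)
      = (∫ y, ‖fderiv ℝ ψ y (EuclideanSpace.single j (1:ℝ))‖ ^ 2)
        - ∫ y, (fderiv ℝ (fun z : EuclideanSpace ℝ (Fin d) => radialFactor a δ z * z j) y
            (EuclideanSpace.single j (1 : ℝ)) * ‖ψ y‖ ^ 2
          - (radialFactor a δ y * y j) ^ 2 * ‖ψ y‖ ^ 2) := by
    intro j
    rw [integral_add (hIsum j) (hIsq j), integral_add (hIgrad j) (hIg j), hparts j,
      integral_sub (hIdiv j) (hIsq j)]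
    ring
  simp_rw [hsplit]
  rw [Finset.sum_sub_distrib, ← integral_finsetSum _ fun j _ => hIsub j]
  have hpot : ∀ y : EuclideanSpace ℝ (Fin d), ∑ j : Fin d,
      (fderiv ℝ (fun z : EuclideanSpace ℝ (Fin d) => radialFactor a δ z * z j) y
            (EuclideanSpace.single j (1 : ℝ)) * ‖ψ y‖ ^ 2
          - (radialFactor a δ y * y j) ^ 2 * ‖ψ y‖ ^ 2) = fieldPotential a δ y * ‖ψ y‖ ^ 2 := by
    intro y
    simp_rw [fderiv_radialFactor_mul_apply a hδ y, ← sub_mul, ← Finset.sum_mul, mul_pow]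
    congr 1
    rw [Finset.sum_sub_distrib, Finset.sum_sub_distrib, ← Finset.sum_div, ← Finset.mul_sum,
      ← Finset.mul_sum, ← EuclideanSpace.real_norm_sq_eq]
    simp [fieldPotential]
  simp_rw [hpot]
  ring

/-- The Hardy-type lower bound with the singularity regularized. -/
lemma le_integral_norm_fderiv_sq {d : ℕ} (hd : 2 ≤ d) {δ : ℝ} (hδ : 0 < δ)
    {ψ : EuclideanSpace ℝ (Fin d) → ℂ} (hψ : ContDiff ℝ (⊤ : ℕ∞) ψ)
    (hc : HasCompactSupport ψ) :
    ((d - 2 : ℝ)/2)^2 * (∫ y, ‖ψ y‖ ^ 2 / (‖y‖ ^ 2 + δ)) + (1/2 : ℝ) * (∫ y, ‖ψ y‖ ^ 2)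
      - (1/16 : ℝ) * (∫ y, ‖y‖ ^ 2 * ‖ψ y‖ ^ 2)
    ≤ ∫ y, ∑ j, ‖fderiv ℝ ψ y (EuclideanSpace.single j (1:ℝ))‖ ^ 2 := by
  rw [integral_norm_fderiv_sq_eq ((d - 2 : ℝ)/2) hδ hψ hc]
  have hψ2 : Continuous (fun y => ‖ψ y‖ ^ 2) := by have := hψ.continuous; fun_prop
  have hc2 : HasCompactSupport (fun y => ‖ψ y‖ ^ 2) :=
    hc.comp_left (g := fun z : ℂ => ‖z‖ ^ 2) (by simp)
  have hI : ∀ g : EuclideanSpace ℝ (Fin d) → ℝ, Continuous g →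
      Integrable (fun y => g y * ‖ψ y‖ ^ 2) := fun g hg =>
    (hg.mul hψ2).integrable_of_hasCompactSupport hc2.mul_left
  have hne : ∀ y : EuclideanSpace ℝ (Fin d), ‖y‖ ^ 2 + δ ≠ 0 := fun y => by positivity
  have h1 : Integrable fun y => ((d - 2 : ℝ)/2)^2 * (‖ψ y‖ ^ 2 / (‖y‖ ^ 2 + δ)) := by
    refine (hI (fun y => ((d - 2 : ℝ)/2)^2 / (‖y‖ ^ 2 + δ))
      (by fun_prop (disch := assumption))).congr (.of_forall fun y => ?_)
    ring
  have h2 := hI (fun _ => 1/2) continuous_const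
  have h3 : Integrable fun y => (1/16 : ℝ) * (‖y‖ ^ 2 * ‖ψ y‖ ^ 2) :=
    (hI (fun y => ‖y‖ ^ 2) (by fun_prop)).const_mul _
  have h12 : Integrable fun y =>
      ((d - 2 : ℝ)/2)^2 * (‖ψ y‖ ^ 2 / (‖y‖ ^ 2 + δ)) + 1/2 * ‖ψ y‖ ^ 2 := h1.add h2
  rw [← integral_const_mul, ← integral_const_mul, ← integral_const_mul, ← integral_add h1 h2,
    ← integral_sub h12 h3]
  refine le_add_of_nonneg_of_le (integral_nonneg fun y => by positivity) ?_
  refine integral_mono (h12.sub h3) (hI _ (continuous_fieldPotential _ hδ)) fun y => ?_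
  have hd' : (0 : ℝ) ≤ d - 2 := by
    have : (2 : ℝ) ≤ d := by exact_mod_cast hd
    linarith
  set c : ℝ := (d - 2 : ℝ) / 2 with hcdef
  have hc0 : 0 ≤ c := by positivity
  have hdc : (d : ℝ) = 2 * c + 2 := by rw [hcdef]; ring
  have key : c ^ 2 / (‖y‖ ^ 2 + δ) + 1/2 - ‖y‖ ^ 2 / 16 ≤ fieldPotential c δ y := by
    rw [fieldPotential_eq c hδ, hdc]
    have : 0 ≤ δ / (‖y‖ ^ 2 + δ) * ((2 * c + c ^ 2) / (‖y‖ ^ 2 + δ) + c / 2) := by positivity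
    have e : c * (2 * c + 2 - 2) - c ^ 2 = c ^ 2 := by ring
    rw [e]
    linarith
  calc _ = (c ^ 2 / (‖y‖ ^ 2 + δ) + 1/2 - ‖y‖ ^ 2 / 16) * ‖ψ y‖ ^ 2 := by
        ring
    _ ≤ _ := mul_le_mul_of_nonneg_right key (by positivity)

lemma ae_ne_zero {d : ℕ} (hd : 2 ≤ d) : ∀ᵐ y : EuclideanSpace ℝ (Fin d), y ≠ 0 := by
  have : Nonempty (Fin d) := ⟨⟨0, by omega⟩⟩
  simp [ae_iff]

lemma half_integral_le_lForm {d : ℕ} (hd : 2 ≤ d)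
    {ψ : EuclideanSpace ℝ (Fin d) → ℂ} (hψ : ContDiff ℝ (⊤ : ℕ∞) ψ)
    (hc : HasCompactSupport ψ) :
    (1/2 : ℝ) * ∫ y, ‖ψ y‖ ^ 2 ≤ lForm d ψ := by
  unfold lForm
  have key := fun n : ℕ => le_integral_norm_fderiv_sq hd (δ := 1 / ((n : ℝ) + 1))
    (by positivity) hψ hc
  by_cases hI : Integrable fun y => ‖ψ y‖ ^ 2 / ‖y‖ ^ 2
  · have hψc := hψ.continuous
    have hlim : Tendsto (fun n : ℕ => ∫ y, ‖ψ y‖ ^ 2 / (‖y‖ ^ 2 + 1 / ((n : ℝ) + 1))) atTop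
        (𝓝 (∫ y, ‖ψ y‖ ^ 2 / ‖y‖ ^ 2)) := by
      have h0 := ae_ne_zero hd
      refine tendsto_integral_of_dominated_convergence _ (fun n => ?_) hI (fun n => ?_) ?_
      · refine Measurable.aestronglyMeasurable ?_
        have := hψc.measurable
        fun_prop
      · filter_upwards [h0] with y hy
        have : 0 < ‖y‖ := norm_pos_iff.2 hy
        rw [norm_of_nonneg (by positivity)]
        gcongr
        simp only [le_add_iff_nonneg_right]
        positivity
      · filter_upwards [h0] with y hy
        have : 0 < ‖y‖ := norm_pos_iff.2 hy
        refine Tendsto.div tendsto_const_nhds ?_ (by positivity)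
        simpa using tendsto_const_nhds.add (tendsto_one_div_add_atTop_nhds_zero_nat (𝕜 := ℝ))
    have := le_of_tendsto' (((hlim.const_mul (((d - 2 : ℝ)/2)^2)).add_const _).sub_const _) key
    linarith
  · have h0 : 0 ≤ ((d - 2 : ℝ)/2)^2 * ∫ y, ‖ψ y‖ ^ 2 / (‖y‖ ^ 2 + 1 / (((0 : ℕ) : ℝ) + 1)) :=
      mul_nonneg (sq_nonneg _) (integral_nonneg fun y => by positivity)
    have := key 0
    rw [integral_undef hI]
    linarith

lemma integrable_norm_rpow_mul_exp {d : ℕ} (hd : 2 ≤ d) {s : ℝ} (hs : -(d : ℝ) < s) :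
    Integrable fun y : EuclideanSpace ℝ (Fin d) => ‖y‖ ^ s * exp (-(1/4) * ‖y‖ ^ 2) := by
  have : Nonempty (Fin d) := ⟨⟨0, by omega⟩⟩
  rw [integrable_fun_norm_addHaar volume (f := fun r : ℝ => r ^ s * exp (-(1/4) * r ^ 2))]
  have h := integrableOn_rpow_mul_exp_neg_mul_sq (b := 1/4) (by norm_num)
    (s := s + (d - 1 : ℝ)) (by linarith)
  refine h.congr_fun (fun r hr => ?_) measurableSet_Ioi
  have hr : (0 : ℝ) < r := hr
  have hcast : ((d - 1 : ℕ) : ℝ) = (d : ℝ) - 1 := by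
    rw [Nat.cast_sub (by omega), Nat.cast_one]
  simp only [finrank_euclideanSpace, Fintype.card_fin, smul_eq_mul]
  rw [rpow_add hr, ← hcast, rpow_natCast]
  ring

lemma integrable_div_norm_sq {d : ℕ} (hd : 3 ≤ d) {g : EuclideanSpace ℝ (Fin d) → ℝ}
    (hg : Continuous g) (hc : HasCompactSupport g) :
    Integrable fun y => g y / ‖y‖ ^ 2 := by
  obtain ⟨C, hC⟩ := (hc.mul_right (f' := fun y => exp ((1/4) * ‖y‖ ^ 2))
    ).exists_bound_of_continuous (hg.mul (by fun_prop))
  have hd' : (3 : ℝ) ≤ d := by exact_mod_cast hd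
  have hI := (integrable_norm_rpow_mul_exp (d := d) (by omega) (s := -2) (by linarith)).const_mul C
  refine hI.mono' (hg.measurable.div (by fun_prop)).aestronglyMeasurable (.of_forall fun y => ?_)
  have h := hC y
  simp only [Pi.mul_apply] at h
  rw [norm_mul, norm_of_nonneg (exp_pos _).le] at h
  have hexp : exp ((1/4) * ‖y‖ ^ 2) * exp (-(1/4) * ‖y‖ ^ 2) = 1 := by
    rw [← exp_add]; simp
  have h2 : ‖g y‖ ≤ C * exp (-(1/4) * ‖y‖ ^ 2) := by
    calc ‖g y‖ = ‖g y‖ * exp ((1/4) * ‖y‖ ^ 2) * exp (-(1/4) * ‖y‖ ^ 2) := by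
          rw [mul_assoc, hexp, mul_one]
      _ ≤ _ := mul_le_mul_of_nonneg_right h (exp_pos _).le
  rw [norm_div, norm_of_nonneg (by positivity : 0 ≤ ‖y‖ ^ 2), rpow_neg (norm_nonneg y), rpow_two,
    div_eq_mul_inv]
  calc ‖g y‖ * (‖y‖ ^ 2)⁻¹ ≤ C * exp (-(1/4) * ‖y‖ ^ 2) * (‖y‖ ^ 2)⁻¹ := by gcongr
    _ = _ := by ring

/-- The regularized ground state `(‖y‖² + δ)^(-a/2) exp(-‖y‖²/8)`. -/
noncomputable def groundState {d : ℕ} (a δ : ℝ) (y : EuclideanSpace ℝ (Fin d)) : ℝ :=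
  (‖y‖ ^ 2 + δ) ^ (-a / 2) * exp (-(1/8) * ‖y‖ ^ 2)

/-- A weight dominating `groundState a δ ^ 2` for all `0 < δ ≤ 1`. -/
noncomputable def dominatingWeight {d : ℕ} (a : ℝ) (y : EuclideanSpace ℝ (Fin d)) : ℝ :=
  (‖y‖ ^ 2 + 1) * (‖y‖ ^ (-2 - 2 * a) * exp (-(1/4) * ‖y‖ ^ 2))

lemma dominatingWeight_nonneg {d : ℕ} (a : ℝ) (y : EuclideanSpace ℝ (Fin d)) :
    0 ≤ dominatingWeight a y := by
  unfold dominatingWeight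
  positivity

lemma integrable_dominatingWeight {d : ℕ} (hd : 2 ≤ d) {a : ℝ} (ha : 2 * a < d - 2) :
    Integrable (dominatingWeight a : EuclideanSpace ℝ (Fin d) → ℝ) := by
  have h1 := integrable_norm_rpow_mul_exp hd (s := -2 - 2 * a) (by linarith)
  have h2 := integrable_norm_rpow_mul_exp hd (s := -2 * a) (by linarith)
  refine (h2.add h1).congr ?_
  filter_upwards [ae_ne_zero hd] with y hy
  have hy : 0 < ‖y‖ := norm_pos_iff.2 hy
  have : ‖y‖ ^ (-2 * a) = ‖y‖ ^ 2 * ‖y‖ ^ (-2 - 2 * a) := by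
    rw [← rpow_two, ← rpow_add hy]
    congr 1
    ring
  simp only [Pi.add_apply, dominatingWeight, this]
  ring

lemma groundState_sq {d : ℕ} (a : ℝ) {δ : ℝ} (hδ : 0 < δ) (y : EuclideanSpace ℝ (Fin d)) :
    groundState a δ y ^ 2
      = (‖y‖ ^ 2 + δ) * (‖y‖ ^ 2 + δ) ^ (-(1 + a)) * exp (-(1/4) * ‖y‖ ^ 2) := by
  have h : 0 < ‖y‖ ^ 2 + δ := by positivity
  unfold groundState
  rw [mul_pow, ← exp_nat_mul, ← rpow_mul_natCast h.le]
  nth_rw 2 [← rpow_one (‖y‖ ^ 2 + δ)]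
  rw [← rpow_add h]
  congr 2 <;> push_cast <;> ring

lemma groundState_sq_le {d : ℕ} {a : ℝ} (ha : -1 < a) {δ : ℝ} (hδ : 0 < δ)
    {y : EuclideanSpace ℝ (Fin d)} (hy : y ≠ 0) :
    groundState a δ y ^ 2
      ≤ (‖y‖ ^ 2 + δ) * (‖y‖ ^ (-2 - 2 * a) * exp (-(1/4) * ‖y‖ ^ 2)) := by
  have hy : 0 < ‖y‖ := norm_pos_iff.2 hy
  rw [groundState_sq a hδ, mul_assoc]
  have h1 : (‖y‖ ^ 2 + δ) ^ (-(1 + a)) ≤ (‖y‖ ^ 2) ^ (-(1 + a)) :=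
    rpow_le_rpow_of_nonpos (by positivity) (by linarith) (by linarith)
  have h2 : (‖y‖ ^ 2) ^ (-(1 + a)) = ‖y‖ ^ (-2 - 2 * a) := by
    rw [← rpow_two, ← rpow_mul hy.le]
    congr 1
    ring
  rw [h2] at h1
  gcongr

lemma groundState_sq_le_dominatingWeight {d : ℕ} {a : ℝ} (ha : -1 < a) {δ : ℝ} (hδ : 0 < δ)
    (hδ1 : δ ≤ 1) {y : EuclideanSpace ℝ (Fin d)} (hy : y ≠ 0) :
    groundState a δ y ^ 2 ≤ dominatingWeight a y := by
  refine (groundState_sq_le ha hδ hy).trans ?_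
  unfold dominatingWeight
  gcongr

lemma groundState_sq_div_le_dominatingWeight {d : ℕ} {a : ℝ} (ha : -1 < a) {δ : ℝ} (hδ : 0 < δ)
    {y : EuclideanSpace ℝ (Fin d)} (hy : y ≠ 0) :
    groundState a δ y ^ 2 / (‖y‖ ^ 2 + δ) ≤ dominatingWeight a y := by
  rw [div_le_iff₀ (by positivity), mul_comm]
  refine (groundState_sq_le ha hδ hy).trans ?_
  refine mul_le_mul_of_nonneg_left (le_mul_of_one_le_left (by positivity) ?_) (by positivity)
  linarith [sq_nonneg ‖y‖]

lemma le_groundState_sq {d : ℕ} {a : ℝ} (ha : -1 < a) {δ : ℝ} (hδ : 0 < δ) (hδ1 : δ ≤ 1)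
    (y : EuclideanSpace ℝ (Fin d)) :
    ‖y‖ ^ 2 * (‖y‖ ^ 2 + 1) ^ (-(1 + a)) * exp (-(1/4) * ‖y‖ ^ 2) ≤ groundState a δ y ^ 2 := by
  rw [groundState_sq a hδ]
  have h1 : (‖y‖ ^ 2 + 1) ^ (-(1 + a)) ≤ (‖y‖ ^ 2 + δ) ^ (-(1 + a)) :=
    rpow_le_rpow_of_nonpos (by positivity) (by linarith) (by linarith)
  gcongr
  linarith

lemma contDiff_groundState {d : ℕ} (a : ℝ) {δ : ℝ} (hδ : 0 < δ) :
    ContDiff ℝ (⊤ : ℕ∞) (groundState a δ : EuclideanSpace ℝ (Fin d) → ℝ) := by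
  have hn : ContDiff ℝ (⊤ : ℕ∞) fun y : EuclideanSpace ℝ (Fin d) => ‖y‖ ^ 2 := contDiff_norm_sq ℝ
  unfold groundState
  refine ((hn.add contDiff_const).rpow_const_of_ne fun y => ?_).mul (contDiff_const.mul hn).exp
  positivity

lemma hasFDerivAt_groundState {d : ℕ} (a : ℝ) {δ : ℝ} (hδ : 0 < δ)
    (y : EuclideanSpace ℝ (Fin d)) :
    HasFDerivAt (groundState a δ)
      (-(radialFactor a δ y * groundState a δ y) • innerSL ℝ y) y := by
  have h : 0 < ‖y‖ ^ 2 + δ := by positivity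
  have h1 : HasFDerivAt (fun z : EuclideanSpace ℝ (Fin d) => ‖z‖ ^ 2) (2 • innerSL ℝ y) y :=
    (hasStrictFDerivAt_norm_sq y).hasFDerivAt
  have h2 : HasDerivAt (fun t : ℝ => (t + δ) ^ (-a / 2) * exp (-(1/8) * t))
      (-(1/2) * (radialFactor a δ y * groundState a δ y)) (‖y‖ ^ 2) := by
    have e1 : HasDerivAt (fun t : ℝ => (t + δ) ^ (-a / 2)) _ (‖y‖ ^ 2) :=
      ((hasDerivAt_id (‖y‖ ^ 2)).add_const δ).rpow_const (p := -a / 2) (Or.inl h.ne')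
    have e2 : HasDerivAt (fun t : ℝ => exp (-(1/8) * t)) _ (‖y‖ ^ 2) :=
      ((hasDerivAt_id (‖y‖ ^ 2)).const_mul (-(1/8))).exp
    refine (e1.mul e2).congr_deriv ?_
    simp only [id, radialFactor, groundState, rpow_sub_one h.ne']
    field_simp
    ring
  refine (h2.comp_hasFDerivAt y h1).congr_fderiv ?_
  ext v
  simp
  ring

lemma fderiv_mul_groundState_add {d : ℕ} (a : ℝ) {δ : ℝ} (hδ : 0 < δ)
    {u : EuclideanSpace ℝ (Fin d) → ℝ} {y : EuclideanSpace ℝ (Fin d)}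
    (hu : DifferentiableAt ℝ u y) (j : Fin d) :
    fderiv ℝ (fun z => ((u z * groundState a δ z : ℝ) : ℂ)) y (EuclideanSpace.single j (1:ℝ))
        + (radialFactor a δ y * y j) • ((u y * groundState a δ y : ℝ) : ℂ)
      = ((fderiv ℝ u y (EuclideanSpace.single j (1:ℝ)) * groundState a δ y : ℝ) : ℂ) := by
  have h : HasFDerivAt (fun z => ((u z * groundState a δ z : ℝ) : ℂ)) _ y :=
    Complex.ofRealCLM.hasFDerivAt.comp y (hu.hasFDerivAt.mul (hasFDerivAt_groundState a hδ y))
  rw [h.fderiv]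
  simp [EuclideanSpace.inner_single_right]
  ring

/-- Upper bound for the form on the regularized ground state times a cutoff. -/
lemma lForm_mul_groundState_le {d : ℕ} (hd : 2 ≤ d) {η : ℝ} (hη : 0 < η) (hη1 : η < 1) {δ : ℝ}
    (hδ : 0 < δ) (hδ1 : δ ≤ 1) {u : EuclideanSpace ℝ (Fin d) → ℝ} (hu : ContDiff ℝ (⊤ : ℕ∞) u)
    (huc : HasCompactSupport u) (hu0 : ∀ y, 0 ≤ u y) (hu1 : ∀ y, u y ≤ 1) {K : ℝ}
    (hK : ∀ y j, |fderiv ℝ u y (EuclideanSpace.single j (1:ℝ))| ≤ K)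
    {a : ℝ} (ha : a = (d - 2) / 2 - η) :
    lForm d (fun y => ((u y * groundState a δ y : ℝ) : ℂ))
      ≤ (1/2 + η/2) * (∫ y, ‖((u y * groundState a δ y : ℝ) : ℂ)‖ ^ 2)
        + d * K ^ 2 * (∫ y : EuclideanSpace ℝ (Fin d), dominatingWeight a y)
        + (|2 * a + a ^ 2| + |a| / 2) *
          ∫ y : EuclideanSpace ℝ (Fin d), δ / (‖y‖ ^ 2 + δ) * dominatingWeight a y := by
  have hd' : (2 : ℝ) ≤ d := by exact_mod_cast hd
  have ha1 : -1 < a := by rw [ha]; linarith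
  have hW := integrable_dominatingWeight hd (a := a) (by rw [ha]; linarith)
  have hWm : Measurable (dominatingWeight a : EuclideanSpace ℝ (Fin d) → ℝ) := by
    unfold dominatingWeight
    fun_prop
  have hWδ : Integrable fun y : EuclideanSpace ℝ (Fin d) =>
      δ / (‖y‖ ^ 2 + δ) * dominatingWeight a y := by
    refine hW.mono' (Measurable.aestronglyMeasurable (by fun_prop)) (.of_forall fun y => ?_)
    have h0 := dominatingWeight_nonneg a y
    rw [norm_of_nonneg (by positivity)]
    refine mul_le_of_le_one_left h0 ((div_le_one (by positivity)).2 ?_)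
    linarith [sq_nonneg ‖y‖]
  set ψ : EuclideanSpace ℝ (Fin d) → ℂ := fun y => ((u y * groundState a δ y : ℝ) : ℂ) with hψdef
  have hψ : ContDiff ℝ (⊤ : ℕ∞) ψ :=
    Complex.ofRealCLM.contDiff.comp (hu.mul (contDiff_groundState a hδ))
  have hc : HasCompactSupport ψ :=
    (huc.mul_right (f' := groundState a δ)).comp_left (g := fun x : ℝ => (x : ℂ)) (by simp)
  have hsq : ∀ y, ‖ψ y‖ ^ 2 = u y ^ 2 * groundState a δ y ^ 2 := fun y => by
    simp only [hψdef, Complex.norm_real, norm_eq_abs, sq_abs, mul_pow]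
  have hle : ∀ y, ‖ψ y‖ ^ 2 ≤ groundState a δ y ^ 2 := fun y => by
    rw [hsq]
    exact mul_le_of_le_one_left (sq_nonneg _) (pow_le_one₀ (hu0 y) (hu1 y))
  have hψ2 : Continuous (fun y => ‖ψ y‖ ^ 2) := by have := hψ.continuous; fun_prop
  have hc2 : HasCompactSupport (fun y => ‖ψ y‖ ^ 2) :=
    hc.comp_left (g := fun z : ℂ => ‖z‖ ^ 2) (by simp)
  have hI : ∀ g : EuclideanSpace ℝ (Fin d) → ℝ, Continuous g →
      Integrable (fun y => g y * ‖ψ y‖ ^ 2) := fun g hg =>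
    (hg.mul hψ2).integrable_of_hasCompactSupport hc2.mul_left
  have hgrad : ∫ y, ∑ j, ‖fderiv ℝ ψ y (EuclideanSpace.single j (1:ℝ))
        + (radialFactor a δ y * y j) • ψ y‖ ^ 2
      ≤ d * K ^ 2 * ∫ y : EuclideanSpace ℝ (Fin d), dominatingWeight a y := by
    rw [← integral_const_mul]
    refine integral_mono_of_nonneg (.of_forall fun y => by positivity) (hW.const_mul _) ?_
    filter_upwards [ae_ne_zero hd] with y hy
    calc _ ≤ ∑ _j : Fin d, K ^ 2 * dominatingWeight a y := by
          refine Finset.sum_le_sum fun j _ => ?_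
          rw [hψdef, fderiv_mul_groundState_add a hδ (hu.differentiable (by simp) y),
            Complex.norm_real, norm_eq_abs, sq_abs, mul_pow]
          have h1 := groundState_sq_le_dominatingWeight ha1 hδ hδ1 hy
          have h2 : fderiv ℝ u y (EuclideanSpace.single j (1:ℝ)) ^ 2 ≤ K ^ 2 :=
            sq_le_sq' (neg_le_of_abs_le (hK y j)) (le_of_abs_le (hK y j))
          gcongr
      _ = _ := by simp; ring
  set B : ℝ := |2 * a + a ^ 2| + |a| / 2 with hB
  have h1 := hI _ (continuous_fieldPotential (d := d) a hδ)
  have h2 : Integrable fun y => (1/16 : ℝ) * (‖y‖ ^ 2 * ‖ψ y‖ ^ 2) :=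
    (hI (fun y => ‖y‖ ^ 2) (by fun_prop)).const_mul _
  have h3 : Integrable fun y => ((d - 2 : ℝ)/2)^2 * (‖ψ y‖ ^ 2 / ‖y‖ ^ 2) := by
    rcases hd.eq_or_lt with rfl | h
    · simp
    · exact (integrable_div_norm_sq h hψ2 hc2).const_mul _
  have h4 := hI (fun _ => 1/2 + η/2) continuous_const
  have h5 : Integrable fun y : EuclideanSpace ℝ (Fin d) =>
      B * (δ / (‖y‖ ^ 2 + δ) * dominatingWeight a y) := hWδ.const_mul B
  have h34 : Integrable fun y => ((d - 2 : ℝ)/2)^2 * (‖ψ y‖ ^ 2 / ‖y‖ ^ 2)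
      + (1/2 + η/2) * ‖ψ y‖ ^ 2 := h3.add h4
  have h345 : Integrable fun y => ((d - 2 : ℝ)/2)^2 * (‖ψ y‖ ^ 2 / ‖y‖ ^ 2)
      + (1/2 + η/2) * ‖ψ y‖ ^ 2 + B * (δ / (‖y‖ ^ 2 + δ) * dominatingWeight a y) := h34.add h5
  have hpot : (∫ y, fieldPotential a δ y * ‖ψ y‖ ^ 2) + (1/16 : ℝ) * (∫ y, ‖y‖ ^ 2 * ‖ψ y‖ ^ 2)
      ≤ ((d - 2 : ℝ)/2)^2 * (∫ y, ‖ψ y‖ ^ 2 / ‖y‖ ^ 2) + (1/2 + η/2) * (∫ y, ‖ψ y‖ ^ 2)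
        + B * ∫ y : EuclideanSpace ℝ (Fin d), δ / (‖y‖ ^ 2 + δ) * dominatingWeight a y := by
    rw [← integral_const_mul, ← integral_const_mul, ← integral_const_mul, ← integral_const_mul,
      ← integral_add h1 h2, ← integral_add h3 h4, ← integral_add h34 h5]
    refine integral_mono_ae (h1.add h2) h345 ?_
    filter_upwards [ae_ne_zero hd] with y hy
    have hy0 : 0 < ‖y‖ := norm_pos_iff.2 hy
    have hw := dominatingWeight_nonneg a y
    have hr : 0 < ‖y‖ ^ 2 + δ := by positivity
    have hmain : (a * (d - 2) - a ^ 2) / (‖y‖ ^ 2 + δ) ≤ ((d - 2 : ℝ)/2)^2 / ‖y‖ ^ 2 := by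
      have : a * (d - 2) - a ^ 2 ≤ ((d - 2 : ℝ)/2)^2 := by
        rw [ha]; nlinarith [sq_nonneg η]
      gcongr
      linarith
    have hconst : (d : ℝ) / 4 - a / 2 = 1/2 + η/2 := by rw [ha]; ring
    have herr : ((2 * a + a ^ 2) / (‖y‖ ^ 2 + δ) + a / 2) * ‖ψ y‖ ^ 2
        ≤ B * dominatingWeight a y := by
      have e1 : ‖ψ y‖ ^ 2 / (‖y‖ ^ 2 + δ) ≤ dominatingWeight a y :=
        (by have := hle y; gcongr : ‖ψ y‖ ^ 2 / (‖y‖ ^ 2 + δ)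
          ≤ groundState a δ y ^ 2 / (‖y‖ ^ 2 + δ)).trans
          (groundState_sq_div_le_dominatingWeight ha1 hδ hy)
      have e2 : ‖ψ y‖ ^ 2 ≤ dominatingWeight a y :=
        (hle y).trans (groundState_sq_le_dominatingWeight ha1 hδ hδ1 hy)
      calc _ = (2 * a + a ^ 2) * (‖ψ y‖ ^ 2 / (‖y‖ ^ 2 + δ)) + a / 2 * ‖ψ y‖ ^ 2 := by ring
        _ ≤ |2 * a + a ^ 2| * dominatingWeight a y + |a| / 2 * dominatingWeight a y := by
            refine add_le_add ?_ ?_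
            · exact mul_le_mul (le_abs_self _) e1 (by positivity) (abs_nonneg _)
            · refine mul_le_mul ?_ e2 (by positivity) (by positivity)
              linarith [le_abs_self a]
        _ = _ := by rw [hB]; ring
    have herr' := mul_le_mul_of_nonneg_left herr (by positivity : 0 ≤ δ / (‖y‖ ^ 2 + δ))
    have hmain' := mul_le_mul_of_nonneg_right hmain (by positivity : 0 ≤ ‖ψ y‖ ^ 2)
    rw [fieldPotential_eq a hδ, hconst]
    calc _ = (a * (d - 2) - a ^ 2) / (‖y‖ ^ 2 + δ) * ‖ψ y‖ ^ 2 + (1/2 + η/2) * ‖ψ y‖ ^ 2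
          + δ / (‖y‖ ^ 2 + δ) * (((2 * a + a ^ 2) / (‖y‖ ^ 2 + δ) + a / 2) * ‖ψ y‖ ^ 2) := by ring
      _ ≤ ((d - 2 : ℝ)/2)^2 / ‖y‖ ^ 2 * ‖ψ y‖ ^ 2 + (1/2 + η/2) * ‖ψ y‖ ^ 2
          + δ / (‖y‖ ^ 2 + δ) * (B * dominatingWeight a y) := by linarith
      _ = _ := by ring
  rw [lForm, integral_norm_fderiv_sq_eq a hδ hψ hc]
  linarith

lemma tendsto_integral_dominatingWeight {d : ℕ} (hd : 2 ≤ d) {a : ℝ} (ha : 2 * a < d - 2) :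
    Tendsto (fun n : ℕ => ∫ y : EuclideanSpace ℝ (Fin d),
      (1 / ((n : ℝ) + 1)) / (‖y‖ ^ 2 + 1 / ((n : ℝ) + 1)) * dominatingWeight a y) atTop (𝓝 0) := by
  have hWm : Measurable (dominatingWeight a : EuclideanSpace ℝ (Fin d) → ℝ) := by
    unfold dominatingWeight
    fun_prop
  rw [← integral_zero (EuclideanSpace ℝ (Fin d)) ℝ]
  refine tendsto_integral_of_dominated_convergence _
    (fun n => Measurable.aestronglyMeasurable (by fun_prop)) (integrable_dominatingWeight hd ha)
    (fun n => .of_forall fun y => ?_) ?_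
  · have h0 := dominatingWeight_nonneg a y
    have hδ : (0 : ℝ) < 1 / ((n : ℝ) + 1) := by positivity
    rw [norm_of_nonneg (by positivity)]
    refine mul_le_of_le_one_left h0 ((div_le_one (by positivity)).2 ?_)
    linarith [sq_nonneg ‖y‖]
  · filter_upwards [ae_ne_zero hd] with y hy
    have hy0 : 0 < ‖y‖ := norm_pos_iff.2 hy
    have h := tendsto_one_div_add_atTop_nhds_zero_nat (𝕜 := ℝ)
    have := (h.div (h.const_add (‖y‖ ^ 2)) (by positivity)).mul_const (dominatingWeight a y)
    simpa using this

lemma exists_lForm_lt {d : ℕ} (hd : 2 ≤ d) {ε : ℝ} (hε : 0 < ε) :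
    ∃ ψ : EuclideanSpace ℝ (Fin d) → ℂ,
      ContDiff ℝ (⊤ : ℕ∞) ψ ∧ HasCompactSupport ψ ∧ ψ ≠ 0 ∧
      lForm d ψ < (1/2 + ε) * ∫ y, ‖ψ y‖ ^ 2 := by
  have : Nonempty (Fin d) := ⟨⟨0, by omega⟩⟩
  have hd' : (2 : ℝ) ≤ d := by exact_mod_cast hd
  obtain ⟨η, hη, hη1, hηε⟩ : ∃ η : ℝ, 0 < η ∧ η < 1 ∧ η ≤ ε :=
    ⟨min ε (1/2), by positivity, (min_le_right _ _).trans_lt (by norm_num), min_le_left _ _⟩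
  obtain ⟨a, ha⟩ : ∃ a : ℝ, a = (d - 2) / 2 - η := ⟨_, rfl⟩
  have ha1 : -1 < a := by rw [ha]; linarith
  have ha2 : 2 * a < d - 2 := by rw [ha]; linarith
  let χ : ContDiffBump (0 : EuclideanSpace ℝ (Fin d)) := ⟨1, 2, one_pos, one_lt_two⟩
  let χ' : ContDiffBump (0 : EuclideanSpace ℝ (Fin d)) := ⟨1/2, 1, by norm_num, by norm_num⟩
  have hχ : ContDiff ℝ (⊤ : ℕ∞) χ := χ.contDiff
  obtain ⟨C, hC⟩ := (χ.hasCompactSupport.fderiv ℝ).exists_bound_of_continuous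
    (hχ.continuous_fderiv (by simp))
  -- a lower bound for the mass of the trial functions, uniform in the regularization
  let w : EuclideanSpace ℝ (Fin d) → ℝ := fun y =>
    χ' y ^ 2 * (‖y‖ ^ 2 * (‖y‖ ^ 2 + 1) ^ (-(1 + a)) * exp (-(1/4) * ‖y‖ ^ 2))
  have hwcont : Continuous w := by
    have h := χ'.continuous
    have h' : Continuous fun y : EuclideanSpace ℝ (Fin d) => (‖y‖ ^ 2 + 1) ^ (-(1 + a)) :=
      Continuous.rpow_const (by fun_prop) fun y => Or.inl (by positivity)
    fun_prop
  have hwc : HasCompactSupport w :=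
    (χ'.hasCompactSupport.comp_left (g := fun x : ℝ => x ^ 2) (by simp)).mul_right
  have hwpos : 0 < ∫ y, w y := by
    obtain ⟨y, hy⟩ := exists_norm_eq (EuclideanSpace ℝ (Fin d)) (by norm_num : (0 : ℝ) ≤ 1/2)
    refine hwcont.integral_pos_of_hasCompactSupport_nonneg_nonzero hwc
      (fun z => by simp only [w, Pi.zero_apply]; positivity) (x := y) ?_
    have h1 : χ' y = 1 := χ'.one_of_mem_closedBall (by simp [χ', hy])
    have h2 : 0 < ‖y‖ := by rw [hy]; norm_num
    simp only [w, h1]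
    positivity
  let u : ℕ → EuclideanSpace ℝ (Fin d) → ℝ := fun n y => χ ((1 / ((n : ℝ) + 1)) • y)
  have hδ : ∀ n : ℕ, (0 : ℝ) < 1 / ((n : ℝ) + 1) := fun n => by positivity
  have hδ1 : ∀ n : ℕ, 1 / ((n : ℝ) + 1) ≤ (1 : ℝ) := fun n => by
    rw [div_le_one (by positivity)]; linarith [(n.cast_nonneg : (0 : ℝ) ≤ n)]
  have hu : ∀ n, ContDiff ℝ (⊤ : ℕ∞) (u n) := fun n => hχ.comp (contDiff_const_smul _)
  have huc : ∀ n, HasCompactSupport (u n) := fun n => χ.hasCompactSupport.comp_smul (hδ n).ne'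
  have hK : ∀ n y j, |fderiv ℝ (u n) y (EuclideanSpace.single j (1:ℝ))|
      ≤ C * (1 / ((n : ℝ) + 1)) := by
    intro n y j
    have h : HasFDerivAt (u n) _ y :=
      ((hχ.differentiable (by simp) ((1 / ((n : ℝ) + 1)) • y)).hasFDerivAt).comp y
        ((hasFDerivAt_id y).const_smul (1 / ((n : ℝ) + 1)))
    rw [h.fderiv]
    simp only [ContinuousLinearMap.comp_apply, smul_apply,
      ContinuousLinearMap.id_apply, map_smul, smul_eq_mul, abs_mul, abs_of_pos (hδ n)]
    rw [mul_comm]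
    refine mul_le_mul_of_nonneg_right ?_ (hδ n).le
    have := (ContinuousLinearMap.le_opNorm (fderiv ℝ χ ((1 / ((n : ℝ) + 1)) • y))
      (EuclideanSpace.single j (1:ℝ))).trans (mul_le_mul_of_nonneg_right (hC _) (norm_nonneg _))
    simpa using this
  let ψ : ℕ → EuclideanSpace ℝ (Fin d) → ℂ := fun n y =>
    ((u n y * groundState a (1 / ((n : ℝ) + 1)) y : ℝ) : ℂ)
  have hψ : ∀ n, ContDiff ℝ (⊤ : ℕ∞) (ψ n) := fun n =>
    Complex.ofRealCLM.contDiff.comp ((hu n).mul (contDiff_groundState a (hδ n)))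
  have hc : ∀ n, HasCompactSupport (ψ n) := fun n =>
    ((huc n).mul_right (f' := groundState a (1 / ((n : ℝ) + 1)))).comp_left
      (g := fun x : ℝ => (x : ℂ)) (by simp)
  have hmass : ∀ n, ∫ y, w y ≤ ∫ y, ‖ψ n y‖ ^ 2 := by
    intro n
    have hψ2 : Continuous (fun y => ‖ψ n y‖ ^ 2) := by have := (hψ n).continuous; fun_prop
    refine integral_mono (hwcont.integrable_of_hasCompactSupport hwc)
      (hψ2.integrable_of_hasCompactSupport
        ((hc n).comp_left (g := fun z : ℂ => ‖z‖ ^ 2) (by simp))) fun y => ?_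
    simp only [ψ, Complex.norm_real, norm_eq_abs, sq_abs, mul_pow, w]
    have hg := le_groundState_sq ha1 (hδ n) (hδ1 n) y
    have hχu : χ' y ^ 2 ≤ u n y ^ 2 := by
      by_cases hy : ‖y‖ ≤ 1
      · have : u n y = 1 := by
          refine χ.one_of_mem_closedBall ?_
          simp only [mem_closedBall_zero_iff, norm_smul, norm_of_nonneg (hδ n).le, χ]
          exact mul_le_one₀ (hδ1 n) (norm_nonneg y) hy
        rw [this, one_pow]
        exact pow_le_one₀ χ'.nonneg χ'.le_one
      · have : χ' y = 0 := χ'.zero_of_le_dist (by simpa [χ'] using (not_le.1 hy).le)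
        rw [this, zero_pow two_ne_zero]
        positivity
    gcongr
  have herr : Tendsto (fun n : ℕ =>
      d * (C * (1 / ((n : ℝ) + 1))) ^ 2 * (∫ y : EuclideanSpace ℝ (Fin d), dominatingWeight a y)
        + (|2 * a + a ^ 2| + |a| / 2) * ∫ y : EuclideanSpace ℝ (Fin d),
          (1 / ((n : ℝ) + 1)) / (‖y‖ ^ 2 + 1 / ((n : ℝ) + 1)) * dominatingWeight a y)
      atTop (𝓝 0) := by
    have h1 := ((((tendsto_one_div_add_atTop_nhds_zero_nat (𝕜 := ℝ)).const_mul C).pow 2).const_mul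
      (d : ℝ)).mul_const (∫ y : EuclideanSpace ℝ (Fin d), dominatingWeight a y)
    have h2 := (tendsto_integral_dominatingWeight hd ha2).const_mul (|2 * a + a ^ 2| + |a| / 2)
    simpa using h1.add h2
  obtain ⟨n, hn⟩ := (herr.eventually_lt_const
    (by positivity : 0 < ε / 2 * ∫ y, w y)).exists
  have hpos : 0 < ∫ y, ‖ψ n y‖ ^ 2 := hwpos.trans_le (hmass n)
  refine ⟨ψ n, hψ n, hc n, fun h => by simp [h] at hpos, ?_⟩
  have hup := lForm_mul_groundState_le hd hη hη1 (hδ n) (hδ1 n) (hu n) (huc n)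
    (fun y => χ.nonneg) (fun y => χ.le_one) (hK n) ha
  have h1 := mul_le_mul_of_nonneg_left (hmass n) (by positivity : 0 ≤ ε / 2)
  have h2 := mul_le_mul_of_nonneg_right hηε hpos.le
  change lForm d (ψ n) ≤ (1/2 + η/2) * (∫ y, ‖ψ n y‖ ^ 2) + _ + _ at hup
  linarith

theorem stmt14 (d : ℕ) (hd : 2 ≤ d) :
    (∀ ψ : EuclideanSpace ℝ (Fin d) → ℂ, ContDiff ℝ (⊤ : ℕ∞) ψ → HasCompactSupport ψ →
      lForm d ψ ≥ (1/2 : ℝ) * ∫ y, ‖ψ y‖^2) ∧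
    (∀ ε > (0:ℝ), ∃ ψ : EuclideanSpace ℝ (Fin d) → ℂ,
      ContDiff ℝ (⊤ : ℕ∞) ψ ∧ HasCompactSupport ψ ∧ ψ ≠ 0 ∧
      lForm d ψ < (1/2 + ε) * ∫ y, ‖ψ y‖^2) := by
  exact ⟨fun ψ hψ hc => half_integral_le_lForm hd hψ hc, fun ε hε => exists_lForm_lt hd hε⟩
end

section
/- Let d ≥ 2, let A : ℝ^d → ℝ^d be smooth and bounded, and suppose that the magnetic tensor B_{jk} := ∂_j A_k − ∂_k A_j is not identically zero. Fix s ≥ 0 and set A_s(y) := e^{s/2} A(e^{s/2} y) and l_s[ψ] := ∫_{ℝ^d} |∇ψ(y) − iA_s(y)ψ(y)|² dy − ((d−2)/2)² ∫_{ℝ^d} |ψ(y)|²/|y|² dy + (1/16) ∫_{ℝ^d} |y|² |ψ(y)|² dy. Then the infimum of l_s[ψ] / ∫_{ℝ^d} |ψ|² dy over all nonzero ψ ∈ C_c^∞(ℝ^d, ℂ) is strictly greater than 1/2. -/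
open MeasureTheory Real

/-- The quadratic form `l_s[ψ]` of the operator `(−i∇ − A_s)² − c_d/|y|² + |y|²/16`
with the singularly scaled potential `A_s(y) := e^{s/2} A(e^{s/2} y)`. -/
noncomputable def lsForm (d : ℕ)
    (A : EuclideanSpace ℝ (Fin d) → EuclideanSpace ℝ (Fin d)) (s : ℝ)
    (ψ : EuclideanSpace ℝ (Fin d) → ℂ) : ℝ :=
  (∫ y, ∑ j, ‖fderiv ℝ ψ y (EuclideanSpace.single j (1:ℝ))
      - Complex.I * (Real.exp (s/2) * A (Real.exp (s/2) • y) j : ℝ) * ψ y‖ ^ 2)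
  - ((d - 2 : ℝ)/2)^2 * (∫ y, ‖ψ y‖^2 / ‖y‖^2)
  + (1/16 : ℝ) * ∫ y, ‖y‖^2 * ‖ψ y‖^2

/-- The partial derivative of a real function in the `j`-th coordinate direction. -/
noncomputable def partialDeriv {d : ℕ} (j : Fin d) (f : EuclideanSpace ℝ (Fin d) → ℝ)
    (y : EuclideanSpace ℝ (Fin d)) : ℝ :=
  fderiv ℝ f y (EuclideanSpace.single j (1 : ℝ))

section LineDerivCalculus

variable {V : Type*} [NormedAddCommGroup V] [NormedSpace ℝ V] {f g : V → ℝ} {f' g' : ℝ} {x v : V}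

theorem HasLineDerivAt.fun_add (hf : HasLineDerivAt ℝ f f' x v) (hg : HasLineDerivAt ℝ g g' x v) :
    HasLineDerivAt ℝ (fun y => f y + g y) (f' + g') x v :=
  HasDerivAt.fun_add hf hg

theorem HasLineDerivAt.fun_sub (hf : HasLineDerivAt ℝ f f' x v) (hg : HasLineDerivAt ℝ g g' x v) :
    HasLineDerivAt ℝ (fun y => f y - g y) (f' - g') x v :=
  HasDerivAt.fun_sub hf hg

theorem HasLineDerivAt.fun_mul (hf : HasLineDerivAt ℝ f f' x v) (hg : HasLineDerivAt ℝ g g' x v) :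
    HasLineDerivAt ℝ (fun y => f y * g y) (f' * g x + f x * g') x v := by
  simpa [HasLineDerivAt] using HasDerivAt.fun_mul hf hg

theorem HasLineDerivAt.congr_lineDeriv (hf : HasLineDerivAt ℝ f f' x v) (h : f' = g') :
    HasLineDerivAt ℝ f g' x v :=
  h ▸ hf

theorem HasLineDerivAt.postcomp {h : ℝ → ℝ} {h' : ℝ} (hf : HasLineDerivAt ℝ f f' x v)
    (hh : HasDerivAt h h' (f x)) : HasLineDerivAt ℝ (fun y => h (f y)) (h' * f') x v := by
  have hh' : HasDerivAt h h' (f (x + (0 : ℝ) • v)) := by simpa using hh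
  exact HasDerivAt.comp (0 : ℝ) hh' hf

end LineDerivCalculus

section Calculus

variable {d : ℕ}

theorem hasLineDerivAt_partialDeriv {f : EuclideanSpace ℝ (Fin d) → ℝ} (hf : ContDiff ℝ 1 f)
    (j : Fin d) (y : EuclideanSpace ℝ (Fin d)) :
    HasLineDerivAt ℝ f (partialDeriv j f y) y (EuclideanSpace.single j (1 : ℝ)) :=
  ((hf.differentiable (by norm_num)) y).hasFDerivAt.hasLineDerivAt _

theorem contDiff_partialDeriv {f : EuclideanSpace ℝ (Fin d) → ℝ}
    (hf : ContDiff ℝ (⊤ : ℕ∞) f) (j : Fin d) : ContDiff ℝ (⊤ : ℕ∞) (partialDeriv j f) :=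
  (hf.fderiv_right (m := (⊤ : ℕ∞)) (by simp)).clm_apply contDiff_const

theorem continuous_partialDeriv {f : EuclideanSpace ℝ (Fin d) → ℝ} (hf : ContDiff ℝ 1 f)
    (j : Fin d) : Continuous (partialDeriv j f) :=
  (hf.continuous_fderiv (by norm_num)).clm_apply continuous_const

theorem HasCompactSupport.partialDeriv {f : EuclideanSpace ℝ (Fin d) → ℝ}
    (hf : HasCompactSupport f) (j : Fin d) : HasCompactSupport (partialDeriv j f) :=
  hf.fderiv_apply ℝ _

theorem partialDeriv_comm {f : EuclideanSpace ℝ (Fin d) → ℝ} (hf : ContDiff ℝ (⊤ : ℕ∞) f)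
    (j k : Fin d) (y : EuclideanSpace ℝ (Fin d)) :
    partialDeriv j (partialDeriv k f) y = partialDeriv k (partialDeriv j f) y := by
  have hd : DifferentiableAt ℝ (fderiv ℝ f) y :=
    (hf.fderiv_right (m := (⊤ : ℕ∞)) (by simp)).differentiable (by simp) y
  have key : ∀ v w : EuclideanSpace ℝ (Fin d),
      fderiv ℝ (fun z => fderiv ℝ f z v) y w = fderiv ℝ (fderiv ℝ f) y w v := by
    intro v w
    rw [fderiv_clm_apply hd (differentiableAt_const v)]
    simp
  have hs : IsSymmSndFDerivAt ℝ f y := (hf.contDiffAt).isSymmSndFDerivAt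
    (by simpa using WithTop.coe_le_coe.2 (le_top : (2 : ℕ∞) ≤ ⊤))
  change fderiv ℝ (fun z => fderiv ℝ f z _) y _ = fderiv ℝ (fun z => fderiv ℝ f z _) y _
  rw [key, key]
  exact hs _ _

/-- The integral of a directional derivative of a compactly supported `C¹` function vanishes. -/
theorem integral_lineDeriv_eq_zero {f f' : EuclideanSpace ℝ (Fin d) → ℝ}
    {v : EuclideanSpace ℝ (Fin d)} (hf : ContDiff ℝ 1 f) (hc : HasCompactSupport f)
    (h : ∀ y, HasLineDerivAt ℝ f (f' y) y v) :
    Integrable f' ∧ ∫ y, f' y = 0 := by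
  have hd : Differentiable ℝ f := hf.differentiable (by norm_num)
  obtain rfl : f' = fun y => fderiv ℝ f y v :=
    funext fun y => (h y).unique ((hd y).hasFDerivAt.hasLineDerivAt v)
  have hi : Integrable (fun y => fderiv ℝ f y v) :=
    Continuous.integrable_of_hasCompactSupport
      ((hf.continuous_fderiv (by norm_num)).clm_apply continuous_const) (hc.fderiv_apply ℝ v)
  refine ⟨hi, ?_⟩
  have := integral_mul_fderiv_eq_neg_fderiv_mul_of_integrable (μ := volume)
    (f := fun _ : EuclideanSpace ℝ (Fin d) => (1 : ℝ)) (g := f) (v := v)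
    (by simp) (by simpa using hi)
    (by simpa using hf.continuous.integrable_of_hasCompactSupport hc)
    (fun x _ => differentiableAt_const _) (fun x _ => hd x)
  simpa using this

theorem hasLineDerivAt_coord (j : Fin d) (y : EuclideanSpace ℝ (Fin d)) :
    HasLineDerivAt ℝ (fun z : EuclideanSpace ℝ (Fin d) => z j) 1 y
      (EuclideanSpace.single j (1 : ℝ)) := by
  simpa [HasLineDerivAt] using (hasDerivAt_id (0 : ℝ)).const_add (y j)

theorem hasLineDerivAt_norm_sub_sq (p : EuclideanSpace ℝ (Fin d)) (j : Fin d)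
    (y : EuclideanSpace ℝ (Fin d)) :
    HasLineDerivAt ℝ (fun z : EuclideanSpace ℝ (Fin d) => ‖z - p‖ ^ 2) (2 * (y j - p j)) y
      (EuclideanSpace.single j (1 : ℝ)) := by
  have h := ((hasFDerivAt_id y).sub_const p).norm_sq.hasLineDerivAt
    (EuclideanSpace.single j (1 : ℝ))
  exact h.congr_lineDeriv (by simp [EuclideanSpace.inner_single_right])

theorem hasLineDerivAt_norm_sq (j : Fin d) (y : EuclideanSpace ℝ (Fin d)) :
    HasLineDerivAt ℝ (fun z : EuclideanSpace ℝ (Fin d) => ‖z‖ ^ 2) (2 * y j) y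
      (EuclideanSpace.single j (1 : ℝ)) := by
  simpa using hasLineDerivAt_norm_sub_sq 0 j y

theorem contDiff_coord (j : Fin d) {n : WithTop ℕ∞} :
    ContDiff ℝ n (fun z : EuclideanSpace ℝ (Fin d) => z j) := by
  fun_prop

end Calculus

section Identities

variable {d : ℕ} {u v : EuclideanSpace ℝ (Fin d) → ℝ}

/-- Integration by parts of `∂ⱼ (Y |ψ|²)` for `ψ = u + i v`, written with the components
`∂ⱼ u + a v + g u` and `∂ⱼ v - a u + g v` of `(∂ⱼ - i a + g) ψ`. -/
theorem integral_divergence_identity (hu : ContDiff ℝ (⊤ : ℕ∞) u) (hv : ContDiff ℝ (⊤ : ℕ∞) v)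
    (hcu : HasCompactSupport u) (hcv : HasCompactSupport v) (j : Fin d)
    (a g : EuclideanSpace ℝ (Fin d) → ℝ) {Y Y' : EuclideanSpace ℝ (Fin d) → ℝ}
    (hY : ContDiff ℝ 1 Y)
    (hY' : ∀ y, HasLineDerivAt ℝ Y (Y' y) y (EuclideanSpace.single j (1 : ℝ))) :
    Integrable (fun y => (Y' y - 2 * g y * Y y) * (u y ^ 2 + v y ^ 2)
      + 2 * Y y * ((partialDeriv j u y + a y * v y + g y * u y) * u y
        + (partialDeriv j v y - a y * u y + g y * v y) * v y)) ∧
    ∫ y, ((Y' y - 2 * g y * Y y) * (u y ^ 2 + v y ^ 2)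
      + 2 * Y y * ((partialDeriv j u y + a y * v y + g y * u y) * u y
        + (partialDeriv j v y - a y * u y + g y * v y) * v y)) = 0 := by
  have hu1 : ContDiff ℝ 1 u := hu.of_le (by simp)
  have hv1 : ContDiff ℝ 1 v := hv.of_le (by simp)
  refine integral_lineDeriv_eq_zero (f := fun y => Y y * (u y * u y + v y * v y))
    (v := EuclideanSpace.single j (1 : ℝ)) (by fun_prop)
    (((hcu.mul_right (f' := u)).add (hcv.mul_right (f' := v))).mul_left (f := Y)) fun y => ?_
  have hU := hasLineDerivAt_partialDeriv hu1 j y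
  have hV := hasLineDerivAt_partialDeriv hv1 j y
  exact ((hY' y).fun_mul ((hU.fun_mul hU).fun_add (hV.fun_mul hV))).congr_lineDeriv (by ring)

/-- The commutator identity for the magnetic derivatives in directions `j` and `k`, tested
against a weight `χ W` with `∂ W = 2 g W`. -/
theorem integral_commutator_identity (hu : ContDiff ℝ (⊤ : ℕ∞) u) (hv : ContDiff ℝ (⊤ : ℕ∞) v)
    (hcu : HasCompactSupport u) (hcv : HasCompactSupport v) (j k : Fin d)
    {aj ak gj gk χ W : EuclideanSpace ℝ (Fin d) → ℝ}
    (haj : ContDiff ℝ 1 aj) (hak : ContDiff ℝ 1 ak) (hχ : ContDiff ℝ 1 χ) (hW : ContDiff ℝ 1 W)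
    (hWj : ∀ y, HasLineDerivAt ℝ W (2 * gj y * W y) y (EuclideanSpace.single j (1 : ℝ)))
    (hWk : ∀ y, HasLineDerivAt ℝ W (2 * gk y * W y) y (EuclideanSpace.single k (1 : ℝ))) :
    let Pj := fun y => partialDeriv j u y + aj y * v y + gj y * u y
    let Qj := fun y => partialDeriv j v y - aj y * u y + gj y * v y
    let Pk := fun y => partialDeriv k u y + ak y * v y + gk y * u y
    let Qk := fun y => partialDeriv k v y - ak y * u y + gk y * v y
    let R := fun y => χ y * W y * (partialDeriv j ak y - partialDeriv k aj y)
        * (u y ^ 2 + v y ^ 2)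
      - 2 * (χ y * W y) * (Pj y * Qk y - Qj y * Pk y)
      - W y * partialDeriv j χ y * (u y * Qk y - v y * Pk y)
      + W y * partialDeriv k χ y * (u y * Qj y - v y * Pj y)
    Integrable R ∧ ∫ y, R y = 0 := by
  intro Pj Qj Pk Qk R
  have hu1 : ContDiff ℝ 1 u := hu.of_le (by simp)
  have hv1 : ContDiff ℝ 1 v := hv.of_le (by simp)
  have hpu : ∀ i, ContDiff ℝ 1 (partialDeriv i u) := fun i =>
    (contDiff_partialDeriv hu i).of_le (by simp)
  have hpv : ∀ i, ContDiff ℝ 1 (partialDeriv i v) := fun i =>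
    (contDiff_partialDeriv hv i).of_le (by simp)
  have current := fun (l i : Fin d) (a g : EuclideanSpace ℝ (Fin d) → ℝ) (ha : ContDiff ℝ 1 a)
      (hWl : ∀ y, HasLineDerivAt ℝ W (2 * g y * W y) y (EuclideanSpace.single l (1 : ℝ))) =>
    integral_lineDeriv_eq_zero
      (f := fun y => (χ y * W y) * ((u y * partialDeriv i v y - v y * partialDeriv i u y)
        - a y * (u y * u y + v y * v y)))
      (by have := hpu i; have := hpv i; fun_prop)
      ((((hcu.mul_right (f' := partialDeriv i v)).sub
        (hcv.mul_right (f' := partialDeriv i u))).sub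
        (((hcu.mul_right (f' := u)).add (hcv.mul_right (f' := v))).mul_left (f := a))).mul_left
        (f := fun y => χ y * W y))
      (fun y => ((hasLineDerivAt_partialDeriv hχ l y).fun_mul (hWl y)).fun_mul
        ((((hasLineDerivAt_partialDeriv hu1 l y).fun_mul
            (hasLineDerivAt_partialDeriv (hpv i) l y)).fun_sub
          ((hasLineDerivAt_partialDeriv hv1 l y).fun_mul
            (hasLineDerivAt_partialDeriv (hpu i) l y))).fun_sub
          ((hasLineDerivAt_partialDeriv ha l y).fun_mul
            (((hasLineDerivAt_partialDeriv hu1 l y).fun_mul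
              (hasLineDerivAt_partialDeriv hu1 l y)).fun_add
            ((hasLineDerivAt_partialDeriv hv1 l y).fun_mul
              (hasLineDerivAt_partialDeriv hv1 l y))))))
  obtain ⟨i1, e1⟩ := current j k ak gj hak hWj
  obtain ⟨i2, e2⟩ := current k j aj gk haj hWk
  have i3 := i2.sub i1
  have e3 := integral_sub' i2 i1
  rw [e1, e2, sub_zero] at e3
  suffices hR : R = _ from hR ▸ ⟨i3, e3⟩
  funext y
  simp only [R, Pj, Qj, Pk, Qk, Pi.sub_apply]
  rw [partialDeriv_comm hu j k y, partialDeriv_comm hv j k y]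
  ring

end Identities

section Fields

variable {d : ℕ}

/-- Minus the logarithmic gradient of the regularised ground state
`(‖y‖² + δ) ^ (-a / 2) * exp (-‖y‖² / 8)`. -/
noncomputable def groundDrift (a δ : ℝ) (j : Fin d) (y : EuclideanSpace ℝ (Fin d)) : ℝ :=
  a * (y j * (‖y‖ ^ 2 + δ)⁻¹) + y j / 4

/-- The inverse square of the regularised ground state. -/
noncomputable def groundWeight (a δ : ℝ) (y : EuclideanSpace ℝ (Fin d)) : ℝ :=
  Real.exp (a * Real.log (‖y‖ ^ 2 + δ) + ‖y‖ ^ 2 / 4)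

/-- A bounded radial field pointing outwards near the origin and inwards near infinity. -/
noncomputable def radialField (j : Fin d) (y : EuclideanSpace ℝ (Fin d)) : ℝ :=
  y j * ((1 - ‖y‖ ^ 2) * ((1 + ‖y‖ ^ 2) ^ 2)⁻¹)

/-- A Gaussian field pointing towards `p`. -/
noncomputable def gaussField (κ : ℝ) (p : EuclideanSpace ℝ (Fin d)) (j : Fin d)
    (y : EuclideanSpace ℝ (Fin d)) : ℝ :=
  (p j - y j) * Real.exp (-κ * ‖y - p‖ ^ 2)

theorem contDiff_groundDrift {a δ : ℝ} (hδ : 0 < δ) (j : Fin d) {n : WithTop ℕ∞} :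
    ContDiff ℝ n (groundDrift a δ j) := by
  have h0 : ∀ y : EuclideanSpace ℝ (Fin d), ‖y‖ ^ 2 + δ ≠ 0 := fun y => by positivity
  have h1 : ContDiff ℝ n fun y : EuclideanSpace ℝ (Fin d) => ‖y‖ ^ 2 := contDiff_norm_sq ℝ
  have h2 : ContDiff ℝ n fun y : EuclideanSpace ℝ (Fin d) => (‖y‖ ^ 2 + δ)⁻¹ :=
    (h1.add contDiff_const).inv h0
  unfold groundDrift
  fun_prop

theorem contDiff_groundWeight {a δ : ℝ} (hδ : 0 < δ) {n : WithTop ℕ∞} :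
    ContDiff ℝ n (groundWeight (d := d) a δ) := by
  have h0 : ∀ y : EuclideanSpace ℝ (Fin d), ‖y‖ ^ 2 + δ ≠ 0 := fun y => by positivity
  have h1 : ContDiff ℝ n fun y : EuclideanSpace ℝ (Fin d) => ‖y‖ ^ 2 := contDiff_norm_sq ℝ
  have h2 : ContDiff ℝ n fun y : EuclideanSpace ℝ (Fin d) => Real.log (‖y‖ ^ 2 + δ) :=
    (h1.add contDiff_const).log h0
  exact Real.contDiff_exp.comp ((contDiff_const.mul h2).add (h1.div_const 4))

theorem contDiff_radialField (j : Fin d) {n : WithTop ℕ∞} :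
    ContDiff ℝ n (radialField (d := d) j) := by
  have h1 : ContDiff ℝ n fun y : EuclideanSpace ℝ (Fin d) => ‖y‖ ^ 2 := contDiff_norm_sq ℝ
  have h2 : ContDiff ℝ n fun y : EuclideanSpace ℝ (Fin d) => ((1 + ‖y‖ ^ 2) ^ 2)⁻¹ :=
    ((contDiff_const.add h1).pow 2).inv fun y => by positivity
  unfold radialField
  fun_prop

theorem contDiff_gaussField (κ : ℝ) (p : EuclideanSpace ℝ (Fin d)) (j : Fin d)
    {n : WithTop ℕ∞} : ContDiff ℝ n (gaussField κ p j) := by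
  have h1 : ContDiff ℝ n fun y : EuclideanSpace ℝ (Fin d) => ‖y - p‖ ^ 2 :=
    (contDiff_norm_sq ℝ).comp (contDiff_id.sub contDiff_const)
  exact (contDiff_const.sub (contDiff_coord j)).mul (Real.contDiff_exp.comp (contDiff_const.mul h1))

theorem hasLineDerivAt_groundDrift {a δ : ℝ} (hδ : 0 < δ) (j : Fin d)
    (y : EuclideanSpace ℝ (Fin d)) :
    HasLineDerivAt ℝ (groundDrift a δ j)
      (a / (‖y‖ ^ 2 + δ) - 2 * a * y j ^ 2 / (‖y‖ ^ 2 + δ) ^ 2 + 1 / 4) y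
      (EuclideanSpace.single j (1 : ℝ)) := by
  have h0 : ‖y‖ ^ 2 + δ ≠ 0 := by positivity
  have h1 : HasDerivAt (fun t : ℝ => (t + δ)⁻¹) (-1 / (‖y‖ ^ 2 + δ) ^ 2) (‖y‖ ^ 2) :=
    ((hasDerivAt_id _).add_const δ).inv h0
  have h2 := (hasLineDerivAt_coord j y).fun_mul ((hasLineDerivAt_norm_sq j y).postcomp h1)
  have h3 : HasDerivAt (fun t : ℝ => a * t) a (y j * (‖y‖ ^ 2 + δ)⁻¹) := by
    simpa using (hasDerivAt_id (y j * (‖y‖ ^ 2 + δ)⁻¹)).const_mul a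
  have h4 : HasDerivAt (fun t : ℝ => t / 4) (1 / 4) (y j) := (hasDerivAt_id _).div_const 4
  refine ((h2.postcomp h3).fun_add
    ((hasLineDerivAt_coord j y).postcomp h4)).congr_lineDeriv ?_
  field_simp
  ring

theorem hasLineDerivAt_groundWeight {a δ : ℝ} (hδ : 0 < δ) (j : Fin d)
    (y : EuclideanSpace ℝ (Fin d)) :
    HasLineDerivAt ℝ (groundWeight a δ) (2 * groundDrift a δ j y * groundWeight a δ y) y
      (EuclideanSpace.single j (1 : ℝ)) := by
  have h0 : ‖y‖ ^ 2 + δ ≠ 0 := by positivity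
  have h1 : HasDerivAt (fun t : ℝ => Real.exp (a * Real.log (t + δ) + t / 4))
      (Real.exp (a * Real.log (‖y‖ ^ 2 + δ) + ‖y‖ ^ 2 / 4)
        * (a * (1 / (‖y‖ ^ 2 + δ)) + 1 / 4)) (‖y‖ ^ 2) :=
    (((((hasDerivAt_id _).add_const δ).log h0).const_mul a).add
      ((hasDerivAt_id _).div_const 4)).exp
  refine ((hasLineDerivAt_norm_sq j y).postcomp h1).congr_lineDeriv ?_
  simp only [groundWeight, groundDrift]
  ring

theorem hasLineDerivAt_radialField (j : Fin d) (y : EuclideanSpace ℝ (Fin d)) :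
    HasLineDerivAt ℝ (radialField j)
      ((1 - ‖y‖ ^ 2) / (1 + ‖y‖ ^ 2) ^ 2
        + 2 * y j ^ 2 * (‖y‖ ^ 2 - 3) / (1 + ‖y‖ ^ 2) ^ 3) y
      (EuclideanSpace.single j (1 : ℝ)) := by
  have h0 : (1 + ‖y‖ ^ 2) ≠ 0 := by positivity
  have h1 : HasDerivAt (fun t : ℝ => (1 - t) * ((1 + t) ^ 2)⁻¹)
      ((-1) * ((1 + ‖y‖ ^ 2) ^ 2)⁻¹ + (1 - ‖y‖ ^ 2) *
        (-(((2 : ℕ) : ℝ) * (1 + ‖y‖ ^ 2) ^ (2 - 1) * 1) / ((1 + ‖y‖ ^ 2) ^ 2) ^ 2)) (‖y‖ ^ 2) :=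
    ((hasDerivAt_id _).const_sub 1).mul
      ((((hasDerivAt_id _).const_add 1).pow 2).inv (pow_ne_zero 2 h0))
  refine ((hasLineDerivAt_coord j y).fun_mul
    ((hasLineDerivAt_norm_sq j y).postcomp h1)).congr_lineDeriv ?_
  field_simp
  ring

theorem hasLineDerivAt_gaussField (κ : ℝ) (p : EuclideanSpace ℝ (Fin d)) (j : Fin d)
    (y : EuclideanSpace ℝ (Fin d)) :
    HasLineDerivAt ℝ (gaussField κ p j)
      (Real.exp (-κ * ‖y - p‖ ^ 2) * (2 * κ * (y j - p j) ^ 2 - 1)) y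
      (EuclideanSpace.single j (1 : ℝ)) := by
  have h1 : HasDerivAt (fun t : ℝ => Real.exp (-κ * t))
      (Real.exp (-κ * ‖y - p‖ ^ 2) * (-κ * 1)) (‖y - p‖ ^ 2) :=
    ((hasDerivAt_id _).const_mul (-κ)).exp
  have h2 : HasDerivAt (fun t : ℝ => p j - t) (-1) (y j) := (hasDerivAt_id _).const_sub _
  refine (((hasLineDerivAt_coord j y).postcomp h2).fun_mul
    ((hasLineDerivAt_norm_sub_sq p j y).postcomp h1)).congr_lineDeriv ?_
  ring

theorem sum_coord_sq (y : EuclideanSpace ℝ (Fin d)) : ∑ j, y j ^ 2 = ‖y‖ ^ 2 := by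
  simp [EuclideanSpace.norm_sq_eq]

theorem sq_coord_le (y : EuclideanSpace ℝ (Fin d)) (j : Fin d) : y j ^ 2 ≤ ‖y‖ ^ 2 := by
  rw [← sum_coord_sq]
  exact Finset.single_le_sum (f := fun i => y i ^ 2) (fun i _ => sq_nonneg _) (Finset.mem_univ j)

theorem norm_sub_sq_le (y p : EuclideanSpace ℝ (Fin d)) :
    ‖y - p‖ ^ 2 ≤ 2 * ‖y‖ ^ 2 + 2 * ‖p‖ ^ 2 := by
  have h := norm_sub_le y p
  nlinarith [sq_nonneg (‖y‖ - ‖p‖), norm_nonneg (y - p), norm_nonneg y, norm_nonneg p]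

theorem norm_sq_le_sub (y p : EuclideanSpace ℝ (Fin d)) :
    ‖y‖ ^ 2 ≤ 2 * ‖y - p‖ ^ 2 + 2 * ‖p‖ ^ 2 := by
  have h : ‖y‖ ≤ ‖y - p‖ + ‖p‖ := by simpa using norm_add_le (y - p) p
  nlinarith [sq_nonneg (‖y - p‖ - ‖p‖), norm_nonneg (y - p), norm_nonneg y, norm_nonneg p]

theorem groundWeight_pos (a δ : ℝ) (y : EuclideanSpace ℝ (Fin d)) : 0 < groundWeight a δ y :=
  Real.exp_pos _

theorem groundWeight_le {a δ : ℝ} (ha : 0 ≤ a) (hδ : 0 < δ) (hδ1 : δ ≤ 1)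
    (y : EuclideanSpace ℝ (Fin d)) :
    groundWeight a δ y ≤ Real.exp (a * (‖y‖ ^ 2 + 1) + ‖y‖ ^ 2 / 4) := by
  have h := Real.log_le_sub_one_of_pos (show 0 < ‖y‖ ^ 2 + δ by positivity)
  have h2 : Real.log (‖y‖ ^ 2 + δ) ≤ ‖y‖ ^ 2 + 1 := by linarith
  unfold groundWeight
  gcongr

theorem le_groundWeight {a δ : ℝ} (ha : 0 ≤ a) (hδ : 0 < δ)
    {y : EuclideanSpace ℝ (Fin d)} (hy : 1 / 16 ≤ ‖y‖ ^ 2) :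
    Real.exp (-(a * Real.log 16)) ≤ groundWeight a δ y := by
  have h : Real.log (1 / 16) ≤ Real.log (‖y‖ ^ 2 + δ) :=
    Real.log_le_log (by norm_num) (by linarith)
  rw [one_div, Real.log_inv] at h
  unfold groundWeight
  rw [Real.exp_le_exp]
  nlinarith [mul_le_mul_of_nonneg_left h ha, sq_nonneg ‖y‖]

theorem abs_radialField_le (j : Fin d) (y : EuclideanSpace ℝ (Fin d)) :
    |radialField j y| ≤ 1 := by
  have h1 := sq_coord_le y j
  have h2 : |1 - ‖y‖ ^ 2| ≤ 1 + ‖y‖ ^ 2 := by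
    rw [abs_le]; constructor <;> nlinarith [sq_nonneg ‖y‖]
  have h3 : |y j| ≤ 1 + ‖y‖ ^ 2 := by
    nlinarith [sq_abs (y j), sq_nonneg (|y j| - 1), abs_nonneg (y j)]
  rw [radialField, ← mul_assoc, ← div_eq_mul_inv, abs_div, abs_mul,
    abs_of_pos (show (0 : ℝ) < (1 + ‖y‖ ^ 2) ^ 2 by positivity), div_le_one (by positivity), sq (1 + _)]
  exact mul_le_mul h3 h2 (abs_nonneg _) (by positivity)

theorem abs_weight_mul_gaussField_le {a δ κ : ℝ} (ha : 0 ≤ a) (hδ : 0 < δ) (hδ1 : δ ≤ 1)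
    (hκ : 2 * a + 2 ≤ κ) (p : EuclideanSpace ℝ (Fin d)) (j : Fin d)
    (y : EuclideanSpace ℝ (Fin d)) :
    |groundWeight a δ y * gaussField κ p j y|
      ≤ Real.exp (a + (2 * a + 1) * ‖p‖ ^ 2) := by
  have h1 : (y j - p j) ^ 2 ≤ ‖y - p‖ ^ 2 := by simpa using sq_coord_le (y - p) j
  have h2 : |p j - y j| ≤ Real.exp (‖y - p‖ ^ 2) := by
    have := Real.add_one_le_exp (‖y - p‖ ^ 2)
    have h3 := sq_abs (p j - y j)
    nlinarith [sq_nonneg (|p j - y j| - 1), abs_nonneg (p j - y j)]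
  rw [gaussField, abs_mul, abs_mul, abs_of_pos (groundWeight_pos a δ y), Real.abs_exp]
  calc groundWeight a δ y * (|p j - y j| * Real.exp (-κ * ‖y - p‖ ^ 2))
      ≤ Real.exp (a * (‖y‖ ^ 2 + 1) + ‖y‖ ^ 2 / 4) *
        (Real.exp (‖y - p‖ ^ 2) * Real.exp (-κ * ‖y - p‖ ^ 2)) := by
        gcongr
        exact groundWeight_le ha hδ hδ1 y
    _ = Real.exp (a * (‖y‖ ^ 2 + 1) + ‖y‖ ^ 2 / 4 + (‖y - p‖ ^ 2 + -κ * ‖y - p‖ ^ 2)) := by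
        rw [← Real.exp_add, ← Real.exp_add]
    _ ≤ _ := by
        rw [Real.exp_le_exp]
        have h4 := norm_sq_le_sub y p
        have h5 := mul_le_mul_of_nonneg_left h4 ha
        have h6 := mul_le_mul_of_nonneg_right hκ (sq_nonneg ‖y - p‖)
        nlinarith [sq_nonneg ‖y - p‖, sq_nonneg ‖p‖]

/-- Weighted divergence of the radial field as a function of `t = ‖y‖²`. -/
noncomputable def radialDiv (a δ t : ℝ) : ℝ :=
  (2 * a + 2) * ((1 - t) / (1 + t) ^ 2) + 2 * t * (t - 3) / (1 + t) ^ 3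
    - 2 * (a * (t / (t + δ)) + t / 4) * ((1 - t) / (1 + t) ^ 2)

theorem radialDiv_eq {a δ t : ℝ} (hδ : 0 < δ) (ht : 0 ≤ t) :
    radialDiv a δ t = ((1 - t ^ 2) * (2 + 2 * a * δ / (t + δ) - t / 2) + 2 * t ^ 2 - 6 * t)
      / (1 + t) ^ 3 := by
  have h1 : t + δ ≠ 0 := by positivity
  have h2 : 1 + t ≠ 0 := by positivity
  unfold radialDiv
  field_simp
  ring

theorem quarter_le_radialDiv {a δ t : ℝ} (ha : 0 ≤ a) (hδ : 0 < δ) (ht : 0 ≤ t)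
    (h : t ≤ 1 / 16 ∨ 16 + 8 * a ≤ t) : 1 / 4 ≤ radialDiv a δ t := by
  have hs0 : 0 ≤ 2 * a * δ / (t + δ) := by positivity
  have hs1 : 2 * a * δ / (t + δ) ≤ 2 * a := by
    rw [div_le_iff₀ (by positivity)]
    nlinarith [mul_nonneg ha ht]
  rw [radialDiv_eq hδ ht, le_div_iff₀ (by positivity)]
  generalize 2 * a * δ / (t + δ) = σ at hs0 hs1
  rcases h with h | h
  · have h1 : 0 ≤ (1 - t ^ 2) * σ := mul_nonneg (by nlinarith) hs0
    nlinarith [mul_nonneg ht ht, mul_nonneg (mul_nonneg ht ht) ht]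
  · have h1 : 0 ≤ (t ^ 2 - 1) * (2 * a - σ) := mul_nonneg (by nlinarith) (by linarith)
    have h2 : 0 ≤ t ^ 2 * (t - (16 + 8 * a)) := mul_nonneg (sq_nonneg t) (by linarith)
    nlinarith

theorem neg_le_radialDiv {a δ t : ℝ} (ha : 0 ≤ a) (hδ : 0 < δ) (ht : 0 ≤ t) :
    -(16 + 6 * a) ≤ radialDiv a δ t := by
  have hs0 : 0 ≤ 2 * a * δ / (t + δ) := by positivity
  have hs1 : 2 * a * δ / (t + δ) ≤ 2 * a := by
    rw [div_le_iff₀ (by positivity)]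
    nlinarith [mul_nonneg ha ht]
  rw [radialDiv_eq hδ ht, le_div_iff₀ (by positivity)]
  generalize 2 * a * δ / (t + δ) = σ at hs0 hs1
  have h3 := mul_nonneg (mul_nonneg ht ht) ht
  have h4 := mul_nonneg ht ht
  have h5 := mul_nonneg ha ht
  have h6 := mul_nonneg ha h4
  have h7 := mul_nonneg ha h3
  have h8 := mul_nonneg h4 (sub_nonneg.2 hs1)
  nlinarith

end Fields

section SpectralGap

variable {d : ℕ}

theorem sum_divergence_radialField {a δ : ℝ} (hd : (d : ℝ) = 2 * a + 2)
    (y : EuclideanSpace ℝ (Fin d)) :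
    ∑ j, (((1 - ‖y‖ ^ 2) / (1 + ‖y‖ ^ 2) ^ 2
        + 2 * y j ^ 2 * (‖y‖ ^ 2 - 3) / (1 + ‖y‖ ^ 2) ^ 3)
      - 2 * groundDrift a δ j y * radialField j y) = radialDiv a δ (‖y‖ ^ 2) := by
  have h : ∀ j, (((1 - ‖y‖ ^ 2) / (1 + ‖y‖ ^ 2) ^ 2
        + 2 * y j ^ 2 * (‖y‖ ^ 2 - 3) / (1 + ‖y‖ ^ 2) ^ 3)
      - 2 * groundDrift a δ j y * radialField j y) = (1 - ‖y‖ ^ 2) / (1 + ‖y‖ ^ 2) ^ 2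
      + y j ^ 2 * (2 * (‖y‖ ^ 2 - 3) / (1 + ‖y‖ ^ 2) ^ 3
        - 2 * (a * (‖y‖ ^ 2 + δ)⁻¹ + 1 / 4) * ((1 - ‖y‖ ^ 2) / (1 + ‖y‖ ^ 2) ^ 2)) := by
    intro j
    simp only [groundDrift, radialField]
    ring
  rw [Finset.sum_congr rfl fun j _ => h j, Finset.sum_add_distrib, ← Finset.sum_mul,
    sum_coord_sq, Finset.sum_const, Finset.card_univ, Fintype.card_fin, nsmul_eq_mul, hd, radialDiv]
  ring

theorem sum_divergence_gaussField (κ : ℝ) (p y : EuclideanSpace ℝ (Fin d)) :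
    ∑ j, Real.exp (-κ * ‖y - p‖ ^ 2) * (2 * κ * (y j - p j) ^ 2 - 1)
      = Real.exp (-κ * ‖y - p‖ ^ 2) * (2 * κ * ‖y - p‖ ^ 2 - d) := by
  rw [← Finset.mul_sum, Finset.sum_sub_distrib, ← Finset.mul_sum, ← sum_coord_sq (y - p)]
  simp

/-- Outside a shell the radial divergence is positive; inside it the Gaussian term compensates. -/
theorem quarter_le_radialDiv_add {a δ κ : ℝ} (ha : 0 ≤ a) (hδ : 0 < δ) (hκ : 0 ≤ κ)
    (p y : EuclideanSpace ℝ (Fin d)) :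
    1 / 4 ≤ radialDiv a δ (‖y‖ ^ 2) + (17 + 6 * a)
        / (Real.exp (-(a * Real.log 16)) * Real.exp (-κ * (2 * (16 + 8 * a) + 2 * ‖p‖ ^ 2)))
      * (groundWeight a δ y * Real.exp (-κ * ‖y - p‖ ^ 2)) := by
  have hW := groundWeight_pos a δ y
  by_cases h : ‖y‖ ^ 2 ≤ 1 / 16 ∨ 16 + 8 * a ≤ ‖y‖ ^ 2
  · have h1 := quarter_le_radialDiv ha hδ (sq_nonneg ‖y‖) h
    have : 0 ≤ (17 + 6 * a)
        / (Real.exp (-(a * Real.log 16)) * Real.exp (-κ * (2 * (16 + 8 * a) + 2 * ‖p‖ ^ 2)))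
      * (groundWeight a δ y * Real.exp (-κ * ‖y - p‖ ^ 2)) := by positivity
    linarith
  · push Not at h
    have h1 := neg_le_radialDiv ha hδ (sq_nonneg ‖y‖)
    have h2 : Real.exp (-κ * (2 * (16 + 8 * a) + 2 * ‖p‖ ^ 2))
        ≤ Real.exp (-κ * ‖y - p‖ ^ 2) := by
      rw [Real.exp_le_exp]
      have h3 : ‖y - p‖ ^ 2 ≤ 2 * (16 + 8 * a) + 2 * ‖p‖ ^ 2 := by
        linarith [norm_sub_sq_le y p, h.2]
      nlinarith
    have h4 := mul_le_mul (le_groundWeight ha hδ h.1.le) h2 (Real.exp_pos _).le hW.le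
    have h5 : 17 + 6 * a ≤ (17 + 6 * a)
        / (Real.exp (-(a * Real.log 16)) * Real.exp (-κ * (2 * (16 + 8 * a) + 2 * ‖p‖ ^ 2)))
      * (groundWeight a δ y * Real.exp (-κ * ‖y - p‖ ^ 2)) := by
      rw [div_mul_eq_mul_div, le_div_iff₀ (by positivity)]
      exact mul_le_mul_of_nonneg_left h4 (by positivity)
    linarith

theorem neg_le_two_mul_cross {η b Y P Q u v : ℝ} (hη : 0 < η) (hY : |Y| ≤ b) :
    -(η * (u ^ 2 + v ^ 2) + b ^ 2 / η * (P ^ 2 + Q ^ 2)) ≤ 2 * Y * (P * u + Q * v) := by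
  have h1 : Y ^ 2 ≤ b ^ 2 := by
    rw [← sq_abs Y]
    exact pow_le_pow_left₀ (abs_nonneg _) hY 2
  have h2 : Y ^ 2 / η * (P ^ 2 + Q ^ 2) ≤ b ^ 2 / η * (P ^ 2 + Q ^ 2) := by gcongr
  have h3 : η * (u ^ 2 + v ^ 2) + Y ^ 2 / η * (P ^ 2 + Q ^ 2) + 2 * Y * (P * u + Q * v)
      = η * ((u + Y * P / η) ^ 2 + (v + Y * Q / η) ^ 2) := by
    field_simp
    ring
  have h4 : 0 ≤ η * ((u + Y * P / η) ^ 2 + (v + Y * Q / η) ^ 2) := by positivity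
  linarith

/-- Absorbing all cross terms of the divergence and commutator identities, pointwise. -/
theorem eighth_sub_le_sum_add {d : ℕ} {P Q Y Dv : Fin d → ℝ}
    {u v h B sj sk b₁ b₂ b₃ b₄ L η : ℝ} (j k : Fin d) (hL : 0 < L) (hη : η = 1 / (8 * (d + 2)))
    (hb₂0 : 0 ≤ b₂) (hY : ∀ i, |Y i| ≤ b₁) (hh : |h| ≤ b₂) (hsj : |sj| ≤ b₃) (hsk : |sk| ≤ b₄)
    (hmain : 1 / 4 ≤ ∑ i, Dv i + L * (h * B)) :
    1 / 8 * (u ^ 2 + v ^ 2) - (b₁ ^ 2 / η + 2 * (L * b₂) + (L * b₃ / 2) ^ 2 / η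
        + (L * b₄ / 2) ^ 2 / η + 1) * ∑ i, (P i ^ 2 + Q i ^ 2) ≤
      (∑ i, (Dv i * (u ^ 2 + v ^ 2) + 2 * Y i * (P i * u + Q i * v)))
      + L * (h * B * (u ^ 2 + v ^ 2) - 2 * h * (P j * Q k - Q j * P k)
        - sj * (u * Q k - v * P k) + sk * (u * Q j - v * P j)) := by
  have hη0 : 0 < η := by rw [hη]; positivity
  have hn0 : 0 ≤ u ^ 2 + v ^ 2 := by positivity
  have hSi : ∀ i, P i ^ 2 + Q i ^ 2 ≤ ∑ i, (P i ^ 2 + Q i ^ 2) := fun i =>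
    Finset.single_le_sum (f := fun i => P i ^ 2 + Q i ^ 2)
      (fun i _ => by positivity) (Finset.mem_univ i)
  have t1 : ∑ i, -(η * (u ^ 2 + v ^ 2) + b₁ ^ 2 / η * (P i ^ 2 + Q i ^ 2))
      ≤ ∑ i, 2 * Y i * (P i * u + Q i * v) :=
    Finset.sum_le_sum fun i _ => neg_le_two_mul_cross hη0 (hY i)
  rw [Finset.sum_neg_distrib, Finset.sum_add_distrib, Finset.sum_const, ← Finset.mul_sum,
    Finset.card_univ, Fintype.card_fin, nsmul_eq_mul] at t1
  generalize ∑ i, (P i ^ 2 + Q i ^ 2) = S at hSi t1 ⊢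
  rw [Finset.sum_add_distrib, ← Finset.sum_mul]
  generalize ∑ i, 2 * Y i * (P i * u + Q i * v) = Z at t1 ⊢
  generalize ∑ i, Dv i = X at hmain ⊢
  have hS0 : 0 ≤ S := le_trans (by positivity) (hSi j)
  have t2 : L * (h * (P j * Q k - Q j * P k)) ≤ L * (b₂ * S) := by
    have h2 : |P j * Q k - Q j * P k| ≤ S := by
      have hj := hSi j
      have hk := hSi k
      rw [abs_le]
      constructor
      · linarith [sq_nonneg (P j + Q k), sq_nonneg (Q j - P k)]
      · linarith [sq_nonneg (P j - Q k), sq_nonneg (Q j + P k)]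
    refine mul_le_mul_of_nonneg_left ((le_abs_self _).trans ?_) hL.le
    rw [abs_mul]
    exact mul_le_mul hh h2 (abs_nonneg _) hb₂0
  have cross : ∀ (b s : ℝ) (i : Fin d), |s| ≤ b →
      -(η * (u ^ 2 + v ^ 2) + (L * b / 2) ^ 2 / η * S) ≤ L * (s * (u * Q i - v * P i)) := by
    intro b s i hs
    have h1 : |L * s / 2| ≤ L * b / 2 := by
      rw [abs_div, abs_mul, abs_of_pos hL, abs_of_pos (zero_lt_two' ℝ)]
      gcongr
    have h2 := neg_le_two_mul_cross (P := Q i) (Q := -P i) (u := u) (v := v) hη0 h1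
    have h3 : (L * b / 2) ^ 2 / η * (Q i ^ 2 + (-P i) ^ 2) ≤ (L * b / 2) ^ 2 / η * S := by
      refine mul_le_mul_of_nonneg_left ?_ (by positivity)
      linarith [neg_sq (P i), hSi i]
    calc _ ≤ -(η * (u ^ 2 + v ^ 2) + (L * b / 2) ^ 2 / η * (Q i ^ 2 + (-P i) ^ 2)) := by
          linarith
      _ ≤ _ := h2
      _ = _ := by ring
  have t3 := cross b₃ (-sj) k (by rwa [abs_neg])
  have t4 := cross b₄ sk j hsk
  have t5 := mul_le_mul_of_nonneg_right hmain hn0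
  have t6 : (d : ℝ) * (η * (u ^ 2 + v ^ 2)) + 2 * (η * (u ^ 2 + v ^ 2))
      = 1 / 8 * (u ^ 2 + v ^ 2) := by
    rw [hη]
    field_simp
  linarith

/-- The weighted values of a compactly supported function are bounded uniformly in the
regularisation parameter. -/
theorem exists_abs_groundWeight_mul_le {a : ℝ} (ha : 0 ≤ a) {f : EuclideanSpace ℝ (Fin d) → ℝ}
    (hf : Continuous f) (hcf : HasCompactSupport f) :
    ∃ b : ℝ, 0 ≤ b ∧ ∀ δ : ℝ, 0 < δ → δ ≤ 1 → ∀ y, |groundWeight a δ y * f y| ≤ b := by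
  obtain ⟨b, hb⟩ := (hcf.mul_left (f := fun y =>
    Real.exp (a * (‖y‖ ^ 2 + 1) + ‖y‖ ^ 2 / 4))).exists_bound_of_continuous (by fun_prop)
  refine ⟨b, (norm_nonneg _).trans (hb 0), fun δ hδ hδ1 y => le_trans ?_ (hb y)⟩
  simp only [Pi.mul_apply]
  rw [Real.norm_eq_abs, abs_mul, abs_mul, abs_of_pos (groundWeight_pos a δ y), Real.abs_exp]
  gcongr
  exact groundWeight_le ha hδ hδ1 y

/-- The Gaussian divergence plus a positive bump near the centre dominates the Gaussian. -/
theorem exp_le_gauss_divergence_add {p : EuclideanSpace ℝ (Fin d)} (χ : ContDiffBump p)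
    {B : EuclideanSpace ℝ (Fin d) → ℝ} {b κ : ℝ} (hb0 : 0 < b)
    (hrB : ∀ y ∈ Metric.ball p χ.rOut, b / 2 < B y)
    (hκ : ((d : ℝ) + 1) / (2 * χ.rIn ^ 2) ≤ κ) (y : EuclideanSpace ℝ (Fin d)) :
    Real.exp (-κ * ‖y - p‖ ^ 2) ≤ Real.exp (-κ * ‖y - p‖ ^ 2) * (2 * κ * ‖y - p‖ ^ 2 - d)
      + 2 * (d + 1) / b * (χ y * B y) := by
  have hr := χ.rIn_pos
  have hκ0 : 0 ≤ κ := le_trans (by positivity) hκ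
  have he : 0 < Real.exp (-κ * ‖y - p‖ ^ 2) := Real.exp_pos _
  have he1 : Real.exp (-κ * ‖y - p‖ ^ 2) ≤ 1 :=
    Real.exp_le_one_iff.2 (by nlinarith [sq_nonneg ‖y - p‖])
  have hχB : 0 ≤ χ y * B y := by
    by_cases hy : y ∈ Metric.ball p χ.rOut
    · exact mul_nonneg χ.nonneg (by linarith [hrB y hy])
    · rw [χ.zero_of_le_dist (by simpa using hy), zero_mul]
  by_cases hy : ‖y - p‖ ≤ χ.rIn
  · have h1 : χ y = 1 := χ.one_of_mem_closedBall (by simpa [dist_eq_norm] using hy)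
    have h2 := hrB y (by rw [Metric.mem_ball, dist_eq_norm]; linarith [χ.rIn_lt_rOut])
    have h3 : (d : ℝ) + 1 ≤ 2 * (d + 1) / b * (χ y * B y) := by
      rw [h1, one_mul, div_mul_eq_mul_div, le_div_iff₀ hb0]
      nlinarith
    have h4 : 0 ≤ Real.exp (-κ * ‖y - p‖ ^ 2) * (2 * κ * ‖y - p‖ ^ 2) := by positivity
    nlinarith
  · have h1 : χ.rIn ^ 2 ≤ ‖y - p‖ ^ 2 := pow_le_pow_left₀ hr.le (not_le.1 hy).le 2
    have h2 : (d : ℝ) + 1 ≤ 2 * κ * ‖y - p‖ ^ 2 := by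
      rw [div_le_iff₀ (by positivity)] at hκ
      nlinarith [mul_le_mul_of_nonneg_left h1 hκ0]
    have h5 : 0 ≤ 2 * ((d : ℝ) + 1) / b * (χ y * B y) := by positivity
    nlinarith [mul_le_mul_of_nonneg_left h2 he.le]

/-- The spectral gap for the regularised ground-state representation, uniformly in the
regularisation parameter. -/
theorem exists_regularised_gap {a : ℝ} (ha : 0 ≤ a) (hd : (d : ℝ) = 2 * a + 2)
    {A : Fin d → EuclideanSpace ℝ (Fin d) → ℝ} (hA : ∀ j, ContDiff ℝ (⊤ : ℕ∞) (A j))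
    {p : EuclideanSpace ℝ (Fin d)} {j k : Fin d}
    (hB : 0 < partialDeriv j (A k) p - partialDeriv k (A j) p) :
    ∃ ε : ℝ, 0 < ε ∧ ∀ u v : EuclideanSpace ℝ (Fin d) → ℝ,
      ContDiff ℝ (⊤ : ℕ∞) u → ContDiff ℝ (⊤ : ℕ∞) v → HasCompactSupport u → HasCompactSupport v →
      ∀ δ : ℝ, 0 < δ → δ ≤ 1 → ε * ∫ y, (u y ^ 2 + v y ^ 2) ≤
        ∫ y, ∑ i, ((partialDeriv i u y + A i y * v y + groundDrift a δ i y * u y) ^ 2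
          + (partialDeriv i v y - A i y * u y + groundDrift a δ i y * v y) ^ 2) := by
  have hA1 : ∀ i, ContDiff ℝ 1 (A i) := fun i => (hA i).of_le (by simp)
  set B : EuclideanSpace ℝ (Fin d) → ℝ :=
    fun y => partialDeriv j (A k) y - partialDeriv k (A j) y with hBdef
  have hBc : Continuous B :=
    (continuous_partialDeriv (hA1 k) j).sub (continuous_partialDeriv (hA1 j) k)
  obtain ⟨r, hr, hrB⟩ : ∃ r > 0, ∀ y ∈ Metric.ball p r, B p / 2 < B y :=
    Metric.eventually_nhds_iff_ball.1
      (hBc.continuousAt.eventually_const_lt (half_lt_self hB))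
  have hb0 : 0 < B p := hB
  let χ : ContDiffBump p := ⟨r / 2, r, by positivity, by linarith⟩
  set κ : ℝ := 2 * a + 2 + 2 * (d + 1) / r ^ 2 with hκ
  have hκ1 : 2 * a + 2 ≤ κ := by
    have : 0 ≤ 2 * ((d : ℝ) + 1) / r ^ 2 := by positivity
    linarith
  have hκ0 : 0 ≤ κ := by linarith
  set C : ℝ := 2 * (d + 1) / B p with hC
  have hC0 : 0 < C := by positivity
  have hdom : ∀ y, Real.exp (-κ * ‖y - p‖ ^ 2)
      ≤ Real.exp (-κ * ‖y - p‖ ^ 2) * (2 * κ * ‖y - p‖ ^ 2 - d) + C * (χ y * B y) := by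
    refine exp_le_gauss_divergence_add χ hb0 hrB ?_
    have : ((d : ℝ) + 1) / (2 * (r / 2) ^ 2) = 2 * (d + 1) / r ^ 2 := by
      field_simp
    exact this.trans_le (by linarith)
  set K : ℝ := (17 + 6 * a)
    / (Real.exp (-(a * Real.log 16)) * Real.exp (-κ * (2 * (16 + 8 * a) + 2 * ‖p‖ ^ 2))) with hK
  have hK0 : 0 < K := by positivity
  set b₁ : ℝ := 1 + K * Real.exp (a + (2 * a + 1) * ‖p‖ ^ 2) with hb₁
  have hχ1 : ContDiff ℝ 1 χ := χ.contDiff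
  obtain ⟨b₂, hb₂0, hb₂⟩ := exists_abs_groundWeight_mul_le ha χ.continuous χ.hasCompactSupport
  obtain ⟨b₃, hb₃0, hb₃⟩ := exists_abs_groundWeight_mul_le ha (continuous_partialDeriv hχ1 j)
    (χ.hasCompactSupport.partialDeriv j)
  obtain ⟨b₄, hb₄0, hb₄⟩ := exists_abs_groundWeight_mul_le ha (continuous_partialDeriv hχ1 k)
    (χ.hasCompactSupport.partialDeriv k)
  set η : ℝ := 1 / (8 * (d + 2)) with hη
  have hη0 : 0 < η := by positivity
  set D : ℝ := b₁ ^ 2 / η + 2 * (K * C * b₂) + (K * C * b₃ / 2) ^ 2 / η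
    + (K * C * b₄ / 2) ^ 2 / η + 1 with hD
  have hD0 : 0 < D := by positivity
  refine ⟨1 / 8 / D, by positivity, fun u v hu hv hcu hcv δ hδ hδ1 => ?_⟩
  have hu1 : ContDiff ℝ 1 u := hu.of_le (by simp)
  have hv1 : ContDiff ℝ 1 v := hv.of_le (by simp)
  set g := groundDrift (d := d) a δ with hg
  set W := groundWeight (d := d) a δ with hW
  have hWd : ∀ i y, HasLineDerivAt ℝ W (2 * g i y * W y) y (EuclideanSpace.single i (1 : ℝ)) :=
    fun i y => hasLineDerivAt_groundWeight hδ i y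
  set P : Fin d → EuclideanSpace ℝ (Fin d) → ℝ :=
    fun i y => partialDeriv i u y + A i y * v y + g i y * u y with hP
  set Q : Fin d → EuclideanSpace ℝ (Fin d) → ℝ :=
    fun i y => partialDeriv i v y - A i y * u y + g i y * v y with hQ
  set Y : Fin d → EuclideanSpace ℝ (Fin d) → ℝ :=
    fun i y => radialField i y + K * (W y * gaussField κ p i y) with hY
  set Y' : Fin d → EuclideanSpace ℝ (Fin d) → ℝ := fun i y =>
    ((1 - ‖y‖ ^ 2) / (1 + ‖y‖ ^ 2) ^ 2 + 2 * y i ^ 2 * (‖y‖ ^ 2 - 3) / (1 + ‖y‖ ^ 2) ^ 3)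
      + K * (2 * g i y * W y * gaussField κ p i y
        + W y * (Real.exp (-κ * ‖y - p‖ ^ 2) * (2 * κ * (y i - p i) ^ 2 - 1))) with hY'
  have hYd : ∀ i y, HasLineDerivAt ℝ (Y i) (Y' i y) y (EuclideanSpace.single i (1 : ℝ)) := by
    intro i y
    refine (hasLineDerivAt_radialField i y).fun_add
      ((((hWd i y).fun_mul (hasLineDerivAt_gaussField κ p i y)).postcomp
        (h := fun t => K * t) ((hasDerivAt_id _).const_mul K)).congr_lineDeriv ?_)
    ring
  have hY1 : ∀ i, ContDiff ℝ 1 (Y i) := fun i =>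
    (contDiff_radialField i).add (contDiff_const.mul
      ((contDiff_groundWeight hδ).mul (contDiff_gaussField κ p i)))
  have hYb : ∀ i y, |Y i y| ≤ b₁ := by
    intro i y
    refine (abs_add_le _ _).trans (add_le_add (abs_radialField_le i y) ?_)
    rw [abs_mul, abs_of_pos hK0]
    exact mul_le_mul_of_nonneg_left (abs_weight_mul_gaussField_le ha hδ hδ1 hκ1 p i y) hK0.le
  have I1 := fun i => integral_divergence_identity hu hv hcu hcv i (A i) (g i) (hY1 i) (hYd i)
  obtain ⟨I2, J2⟩ := integral_commutator_identity hu hv hcu hcv j k (hA1 j) (hA1 k) hχ1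
    (contDiff_groundWeight hδ) (hWd j) (hWd k)
  have I3 := (integrable_finsetSum Finset.univ fun i _ => (I1 i).1).add (I2.const_mul (K * C))
  have J3 := integral_add (integrable_finsetSum Finset.univ fun i _ => (I1 i).1)
    (I2.const_mul (K * C))
  rw [integral_finsetSum _ fun i _ => (I1 i).1, Finset.sum_congr rfl fun i _ => (I1 i).2,
    integral_const_mul, J2, Finset.sum_const_zero, mul_zero, add_zero] at J3
  have In : Integrable fun y => u y ^ 2 + v y ^ 2 := by
    refine Continuous.integrable_of_hasCompactSupport (by fun_prop) ?_
    simp only [sq]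
    exact (hcu.mul_right (f' := u)).add (hcv.mul_right (f' := v))
  have IS : Integrable fun y => ∑ i, (P i y ^ 2 + Q i y ^ 2) := by
    refine integrable_finsetSum _ fun i _ => ?_
    have c1 := continuous_partialDeriv hu1 i
    have c2 := continuous_partialDeriv hv1 i
    have c3 := (hA1 i).continuous
    have c4 : Continuous (g i) := (contDiff_groundDrift hδ i (n := 1)).continuous
    have cP : HasCompactSupport (P i) := ((hcu.partialDeriv i).add
      (hcv.mul_left (f := A i))).add (hcu.mul_left (f := g i))
    have cQ : HasCompactSupport (Q i) := ((hcv.partialDeriv i).sub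
      (hcu.mul_left (f := A i))).add (hcv.mul_left (f := g i))
    refine Continuous.integrable_of_hasCompactSupport (by fun_prop) ?_
    simp only [sq]
    exact (cP.mul_right (f' := P i)).add (cQ.mul_right (f' := Q i))
  have key : ∀ y, 1 / 8 * (u y ^ 2 + v y ^ 2) - D * ∑ i, (P i y ^ 2 + Q i y ^ 2) ≤
      (∑ i, ((Y' i y - 2 * g i y * Y i y) * (u y ^ 2 + v y ^ 2)
        + 2 * Y i y * (P i y * u y + Q i y * v y)))
      + K * C * (χ y * W y * B y * (u y ^ 2 + v y ^ 2)
        - 2 * (χ y * W y) * (P j y * Q k y - Q j y * P k y)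
        - W y * partialDeriv j χ y * (u y * Q k y - v y * P k y)
        + W y * partialDeriv k χ y * (u y * Q j y - v y * P j y)) := by
    intro y
    have hdiv : ∑ i, (Y' i y - 2 * g i y * Y i y) = radialDiv a δ (‖y‖ ^ 2)
        + K * (W y * (Real.exp (-κ * ‖y - p‖ ^ 2) * (2 * κ * ‖y - p‖ ^ 2 - d))) := by
      rw [← sum_divergence_radialField hd y, ← sum_divergence_gaussField, Finset.mul_sum,
        Finset.mul_sum, ← Finset.sum_add_distrib]
      refine Finset.sum_congr rfl fun i _ => ?_
      simp only [hY, hY', hg]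
      ring
    have hmain : 1 / 4 ≤ ∑ i, (Y' i y - 2 * g i y * Y i y) + K * C * (χ y * W y * B y) := by
      have h1 := quarter_le_radialDiv_add ha hδ hκ0 p y
      have h2 := mul_le_mul_of_nonneg_left (hdom y)
        (mul_nonneg hK0.le (groundWeight_pos a δ y).le)
      rw [hdiv]
      calc (1 : ℝ) / 4 ≤ radialDiv a δ (‖y‖ ^ 2)
            + K * (W y * Real.exp (-κ * ‖y - p‖ ^ 2)) := h1
        _ = radialDiv a δ (‖y‖ ^ 2) + K * W y * Real.exp (-κ * ‖y - p‖ ^ 2) := by ring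
        _ ≤ radialDiv a δ (‖y‖ ^ 2) + K * W y * _ := add_le_add_right h2 _
        _ = _ := by ring
    exact eighth_sub_le_sum_add j k (mul_pos hK0 hC0) hη hb₂0 (fun i => hYb i y)
      (by rw [mul_comm]; exact hb₂ δ hδ hδ1 y) (hb₃ δ hδ hδ1 y) (hb₄ δ hδ hδ1 y) hmain
  have hfin := integral_mono ((In.const_mul (1 / 8)).sub (IS.const_mul D)) I3 key
  rw [integral_sub' (In.const_mul (1 / 8)) (IS.const_mul D), integral_const_mul,
    integral_const_mul] at hfin
  have hfin' : 1 / 8 * (∫ y, (u y ^ 2 + v y ^ 2))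
      - D * ∫ y, ∑ i, (P i y ^ 2 + Q i y ^ 2) ≤ 0 := hfin.trans_eq J3
  rw [div_mul_eq_mul_div, div_le_iff₀ hD0]
  linarith

end SpectralGap

section HardyForm

variable {d : ℕ}

theorem sum_groundDrift_sq_sub_le {a δ : ℝ} (ha : 0 ≤ a) (hd : (d : ℝ) = 2 * a + 2) (hδ : 0 < δ)
    (y : EuclideanSpace ℝ (Fin d)) :
    ∑ j, (groundDrift a δ j y ^ 2
      - (a / (‖y‖ ^ 2 + δ) - 2 * a * y j ^ 2 / (‖y‖ ^ 2 + δ) ^ 2 + 1 / 4))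
      ≤ ‖y‖ ^ 2 / 16 - 1 / 2 - a ^ 2 / (‖y‖ ^ 2 + δ) := by
  have h : ∀ j, groundDrift a δ j y ^ 2
      - (a / (‖y‖ ^ 2 + δ) - 2 * a * y j ^ 2 / (‖y‖ ^ 2 + δ) ^ 2 + 1 / 4)
      = y j ^ 2 * ((a / (‖y‖ ^ 2 + δ) + 1 / 4) ^ 2 + 2 * a / (‖y‖ ^ 2 + δ) ^ 2)
        - (a / (‖y‖ ^ 2 + δ) + 1 / 4) := by
    intro j
    simp only [groundDrift]
    ring
  rw [Finset.sum_congr rfl fun j _ => h j, Finset.sum_sub_distrib, ← Finset.sum_mul,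
    sum_coord_sq, Finset.sum_const, Finset.card_univ, Fintype.card_fin, nsmul_eq_mul, hd]
  have hr := sq_nonneg ‖y‖
  generalize ‖y‖ ^ 2 = t at hr
  have h1 : t + δ ≠ 0 := by positivity
  have h2 : t * ((a / (t + δ) + 1 / 4) ^ 2 + 2 * a / (t + δ) ^ 2)
      - (2 * a + 2) * (a / (t + δ) + 1 / 4)
      = t / 16 - 1 / 2 - a ^ 2 / (t + δ)
        - ((a ^ 2 + 2 * a) * δ / (t + δ) ^ 2 + a * δ / (2 * (t + δ))) := by
    field_simp
    ring
  have h3 : 0 ≤ (a ^ 2 + 2 * a) * δ / (t + δ) ^ 2 + a * δ / (2 * (t + δ)) := by positivity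
  linarith

/-- The regularised ground-state representation bounds the magnetic energy from below. -/
theorem integral_regularised_le {a δ : ℝ} (ha : 0 ≤ a) (hd : (d : ℝ) = 2 * a + 2) (hδ : 0 < δ)
    {A : Fin d → EuclideanSpace ℝ (Fin d) → ℝ} (hA : ∀ j, Continuous (A j))
    {u v : EuclideanSpace ℝ (Fin d) → ℝ} (hu : ContDiff ℝ (⊤ : ℕ∞) u)
    (hv : ContDiff ℝ (⊤ : ℕ∞) v) (hcu : HasCompactSupport u) (hcv : HasCompactSupport v) :
    ∫ y, ∑ i, ((partialDeriv i u y + A i y * v y + groundDrift a δ i y * u y) ^ 2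
        + (partialDeriv i v y - A i y * u y + groundDrift a δ i y * v y) ^ 2)
      ≤ (∫ y, ∑ i, ((partialDeriv i u y + A i y * v y) ^ 2
          + (partialDeriv i v y - A i y * u y) ^ 2))
        + 1 / 16 * (∫ y, ‖y‖ ^ 2 * (u y ^ 2 + v y ^ 2))
        - 1 / 2 * (∫ y, (u y ^ 2 + v y ^ 2))
        - a ^ 2 * ∫ y, (u y ^ 2 + v y ^ 2) / (‖y‖ ^ 2 + δ) := by
  have hu1 : ContDiff ℝ 1 u := hu.of_le (by simp)
  have hv1 : ContDiff ℝ 1 v := hv.of_le (by simp)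
  have hcn : HasCompactSupport fun y => u y ^ 2 + v y ^ 2 := by
    simp only [sq]
    exact (hcu.mul_right (f' := u)).add (hcv.mul_right (f' := v))
  have energy : ∀ g : Fin d → EuclideanSpace ℝ (Fin d) → ℝ, (∀ i, Continuous (g i)) →
      Integrable fun y => ∑ i, ((partialDeriv i u y + A i y * v y + g i y * u y) ^ 2
        + (partialDeriv i v y - A i y * u y + g i y * v y) ^ 2) := by
    intro g hg
    refine integrable_finsetSum _ fun i _ => ?_
    have c1 := continuous_partialDeriv hu1 i
    have c2 := continuous_partialDeriv hv1 i
    have c3 := hA i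
    have c4 := hg i
    have cP := ((hcu.partialDeriv i).add (hcv.mul_left (f := A i))).add (hcu.mul_left (f := g i))
    have cQ := ((hcv.partialDeriv i).sub (hcu.mul_left (f := A i))).add (hcv.mul_left (f := g i))
    refine Continuous.integrable_of_hasCompactSupport (by fun_prop) ?_
    simp only [sq]
    exact cP.mul_right.add cQ.mul_right
  have I0 : Integrable fun y => ∑ i, ((partialDeriv i u y + A i y * v y) ^ 2
      + (partialDeriv i v y - A i y * u y) ^ 2) := by
    simpa using energy (fun _ _ => 0) fun _ => continuous_const
  have I1 := energy (groundDrift a δ) fun i => (contDiff_groundDrift hδ i (n := 1)).continuous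
  have I2 : Integrable fun y => u y ^ 2 + v y ^ 2 :=
    Continuous.integrable_of_hasCompactSupport (by fun_prop) hcn
  have I3 : Integrable fun y => ‖y‖ ^ 2 * (u y ^ 2 + v y ^ 2) :=
    Continuous.integrable_of_hasCompactSupport (by fun_prop)
      (hcn.mul_left (f := fun y => ‖y‖ ^ 2))
  have I4 : Integrable fun y => (u y ^ 2 + v y ^ 2) / (‖y‖ ^ 2 + δ) := by
    simp only [div_eq_mul_inv]
    refine Continuous.integrable_of_hasCompactSupport ?_
      (hcn.mul_right (f' := fun y => (‖y‖ ^ 2 + δ)⁻¹))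
    have : Continuous fun y : EuclideanSpace ℝ (Fin d) => (‖y‖ ^ 2 + δ)⁻¹ :=
      Continuous.inv₀ (by fun_prop) fun y => by positivity
    fun_prop
  have I5 := fun i => integral_divergence_identity hu hv hcu hcv i (A i) (groundDrift a δ i)
    (contDiff_groundDrift hδ i) (hasLineDerivAt_groundDrift (a := a) hδ i)
  have I6 := integrable_finsetSum Finset.univ fun i _ => (I5 i).1
  have J6 := integral_finsetSum Finset.univ fun i _ => (I5 i).1
  rw [Finset.sum_congr rfl fun i _ => (I5 i).2, Finset.sum_const_zero] at J6
  have key := integral_mono I1 ((((I0.add (I3.const_mul (1 / 16))).sub (I2.const_mul (1 / 2))).sub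
    (I4.const_mul (a ^ 2))).add I6) (fun y => ?_)
  · rw [integral_add' (((I0.add (I3.const_mul (1 / 16))).sub (I2.const_mul (1 / 2))).sub
      (I4.const_mul (a ^ 2))) I6, J6, integral_sub' ((I0.add (I3.const_mul (1 / 16))).sub
      (I2.const_mul (1 / 2))) (I4.const_mul (a ^ 2)), integral_sub' (I0.add
      (I3.const_mul (1 / 16))) (I2.const_mul (1 / 2)), integral_add' I0 (I3.const_mul (1 / 16)),
      integral_const_mul, integral_const_mul, integral_const_mul, add_zero] at key
    exact key
  · simp only [Pi.add_apply, Pi.sub_apply]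
    have h1 := mul_le_mul_of_nonneg_right (sum_groundDrift_sq_sub_le ha hd hδ y)
      (show 0 ≤ u y ^ 2 + v y ^ 2 by positivity)
    rw [Finset.sum_mul] at h1
    rw [show ∀ b c e f g : ℝ, b + c - e - f + g = (b + g) + (c - e - f) by intros; ring,
      ← Finset.sum_add_distrib]
    refine le_trans (le_of_eq ?_) (add_le_add_right (h1.trans_eq ?_) _)
    · rw [← Finset.sum_add_distrib]
      exact Finset.sum_congr rfl fun i _ => by ring
    · ring

/-- Lower bound for the magnetic Hardy–harmonic energy. -/
theorem exists_hardy_gap {a : ℝ} (ha : 0 ≤ a) (hd : (d : ℝ) = 2 * a + 2)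
    {A : Fin d → EuclideanSpace ℝ (Fin d) → ℝ} (hA : ∀ j, ContDiff ℝ (⊤ : ℕ∞) (A j))
    {p : EuclideanSpace ℝ (Fin d)} {j k : Fin d}
    (hB : 0 < partialDeriv j (A k) p - partialDeriv k (A j) p) :
    ∃ ε : ℝ, 0 < ε ∧ ∀ u v : EuclideanSpace ℝ (Fin d) → ℝ,
      ContDiff ℝ (⊤ : ℕ∞) u → ContDiff ℝ (⊤ : ℕ∞) v → HasCompactSupport u → HasCompactSupport v →
      (1 / 2 + ε) * ∫ y, (u y ^ 2 + v y ^ 2) ≤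
        (∫ y, ∑ i, ((partialDeriv i u y + A i y * v y) ^ 2
          + (partialDeriv i v y - A i y * u y) ^ 2))
        - a ^ 2 * (∫ y, (u y ^ 2 + v y ^ 2) / ‖y‖ ^ 2)
        + 1 / 16 * ∫ y, ‖y‖ ^ 2 * (u y ^ 2 + v y ^ 2) := by
  obtain ⟨ε, hε, h⟩ := exists_regularised_gap ha hd hA hB
  refine ⟨ε, hε, fun u v hu hv hcu hcv => ?_⟩
  have hreg : ∀ δ : ℝ, 0 < δ → δ ≤ 1 → _ := fun δ hδ hδ1 => (h u v hu hv hcu hcv δ hδ hδ1).trans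
    (integral_regularised_le ha hd hδ (fun j => (hA j).continuous) hu hv hcu hcv)
  by_cases hi : Integrable fun y => (u y ^ 2 + v y ^ 2) / ‖y‖ ^ 2
  · have hlim : Filter.Tendsto (fun n : ℕ => ∫ y, (u y ^ 2 + v y ^ 2)
        / (‖y‖ ^ 2 + 1 / ((n : ℝ) + 1))) Filter.atTop
        (nhds (∫ y, (u y ^ 2 + v y ^ 2) / ‖y‖ ^ 2)) := by
      have hne : ∀ᵐ y : EuclideanSpace ℝ (Fin d), y ≠ 0 := by
        have : Nonempty (Fin d) := ⟨j⟩
        exact Measure.ae_ne volume 0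
      have hcu' := hu.continuous
      have hcv' := hv.continuous
      refine tendsto_integral_of_dominated_convergence _ (fun n => ?_) hi (fun n => ?_) ?_
      · refine Continuous.aestronglyMeasurable ?_
        exact Continuous.div (by fun_prop) (by fun_prop) fun y => by positivity
      · filter_upwards [hne] with y hy
        have hy' : 0 < ‖y‖ := norm_pos_iff.2 hy
        rw [Real.norm_of_nonneg (by positivity)]
        gcongr
        exact le_add_of_nonneg_right (by positivity)
      · filter_upwards [hne] with y hy
        have hy' : ‖y‖ ^ 2 ≠ 0 := by simpa using hy
        refine Filter.Tendsto.div tendsto_const_nhds ?_ hy'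
        simpa using tendsto_one_div_add_atTop_nhds_zero_nat.const_add (‖y‖ ^ 2)
    have hle := ge_of_tendsto' ((hlim.const_mul (a ^ 2)).const_sub _) fun n : ℕ =>
      hreg (1 / ((n : ℝ) + 1)) (by positivity)
        ((div_le_one (by positivity)).2 (by linarith [(Nat.cast_nonneg n : (0 : ℝ) ≤ n)]))
    linarith
  · rw [integral_undef hi]
    have h0 : 0 ≤ a ^ 2 * ∫ y, (u y ^ 2 + v y ^ 2) / (‖y‖ ^ 2 + 1) :=
      mul_nonneg (sq_nonneg a) (integral_nonneg fun y => by positivity)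
    linarith [hreg 1 one_pos le_rfl]

end HardyForm

section ComplexForm

variable {d : ℕ}

theorem norm_sq_magnetic_eq {ψ : EuclideanSpace ℝ (Fin d) → ℂ} (hψ : Differentiable ℝ ψ)
    (j : Fin d) (b : ℝ) (y : EuclideanSpace ℝ (Fin d)) :
    ‖fderiv ℝ ψ y (EuclideanSpace.single j (1 : ℝ)) - Complex.I * (b : ℝ) * ψ y‖ ^ 2
      = (partialDeriv j (fun z => (ψ z).re) y + b * (ψ y).im) ^ 2
        + (partialDeriv j (fun z => (ψ z).im) y - b * (ψ y).re) ^ 2 := by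
  have h1 : partialDeriv j (fun z => (ψ z).re) y
      = (fderiv ℝ ψ y (EuclideanSpace.single j (1 : ℝ))).re := by
    have := (Complex.reCLM.hasFDerivAt.comp y (hψ y).hasFDerivAt).fderiv
    exact congrArg (fun L => L (EuclideanSpace.single j (1 : ℝ))) this
  have h2 : partialDeriv j (fun z => (ψ z).im) y
      = (fderiv ℝ ψ y (EuclideanSpace.single j (1 : ℝ))).im := by
    have := (Complex.imCLM.hasFDerivAt.comp y (hψ y).hasFDerivAt).fderiv
    exact congrArg (fun L => L (EuclideanSpace.single j (1 : ℝ))) this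
  rw [h1, h2, Complex.sq_norm, Complex.normSq_apply]
  simp
  ring

theorem partialDeriv_scaled (f : EuclideanSpace ℝ (Fin d) → ℝ) (c : ℝ) (j : Fin d)
    (hf : Differentiable ℝ f) (y : EuclideanSpace ℝ (Fin d)) :
    partialDeriv j (fun z => c * f (c • z)) y = c ^ 2 * partialDeriv j f (c • y) := by
  have h1 : DifferentiableAt ℝ (fun z => f (c • z)) y := by fun_prop
  unfold partialDeriv
  rw [fderiv_const_mul h1, fderiv_comp_smul]
  simp
  ring

/-- A smooth potential with nonvanishing magnetic field lifts the form `lsForm` above `1 / 2`. -/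
theorem exists_lsForm_gap (hd : 2 ≤ d) {A : EuclideanSpace ℝ (Fin d) → EuclideanSpace ℝ (Fin d)}
    (hA : ContDiff ℝ (⊤ : ℕ∞) A) (s : ℝ) {x : EuclideanSpace ℝ (Fin d)} {j k : Fin d}
    (hB : 0 < partialDeriv j (fun y => A y k) x - partialDeriv k (fun y => A y j) x) :
    ∃ ε : ℝ, 0 < ε ∧ ∀ ψ : EuclideanSpace ℝ (Fin d) → ℂ, ContDiff ℝ (⊤ : ℕ∞) ψ →
      HasCompactSupport ψ → (1 / 2 + ε) * ∫ y, ‖ψ y‖ ^ 2 ≤ lsForm d A s ψ := by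
  have hAj : ∀ i, ContDiff ℝ (⊤ : ℕ∞) fun y => A y i := fun i => (contDiff_coord i).comp hA
  have hc : 0 < Real.exp (s / 2) := Real.exp_pos _
  obtain ⟨ε, hε, h⟩ := exists_hardy_gap (d := d) (a := ((d : ℝ) - 2) / 2)
    (A := fun i y => Real.exp (s / 2) * A (Real.exp (s / 2) • y) i)
    (p := (Real.exp (s / 2))⁻¹ • x) (j := j) (k := k)
    (div_nonneg (sub_nonneg.2 (by exact_mod_cast hd)) zero_le_two) (by ring)
    (fun i => contDiff_const.mul ((hAj i).comp (contDiff_const_smul _))) (by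
      rw [partialDeriv_scaled (fun y => A y k) _ _ ((hAj k).differentiable (by simp)),
        partialDeriv_scaled (fun y => A y j) _ _ ((hAj j).differentiable (by simp)),
        smul_inv_smul₀ hc.ne', ← mul_sub]
      positivity)
  refine ⟨ε, hε, fun ψ hψ hcψ => ?_⟩
  have hre : ContDiff ℝ (⊤ : ℕ∞) fun z => (ψ z).re := Complex.reCLM.contDiff.comp hψ
  have him : ContDiff ℝ (⊤ : ℕ∞) fun z => (ψ z).im := Complex.imCLM.contDiff.comp hψ
  have hn : ∀ y, ‖ψ y‖ ^ 2 = (ψ y).re ^ 2 + (ψ y).im ^ 2 := fun y => by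
    rw [Complex.sq_norm, Complex.normSq_apply]
    ring
  have key := h _ _ hre him (hcψ.comp_left (g := Complex.re) rfl)
    (hcψ.comp_left (g := Complex.im) rfl)
  unfold lsForm
  simp only [norm_sq_magnetic_eq (hψ.differentiable (by simp)), hn]
  exact key

theorem integral_norm_sq_pos {ψ : EuclideanSpace ℝ (Fin d) → ℂ} (hψ : Continuous ψ)
    (hcψ : HasCompactSupport ψ) (h0 : ψ ≠ 0) : 0 < ∫ y, ‖ψ y‖ ^ 2 := by
  obtain ⟨y, hy⟩ := Function.ne_iff.1 h0
  exact Continuous.integral_pos_of_hasCompactSupport_nonneg_nonzero (x := y) (by fun_prop)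
    (hcψ.comp_left (g := fun z : ℂ => ‖z‖ ^ 2) (by simp)) (fun y => by positivity)
    (by simpa using hy)

end ComplexForm

theorem stmt15 (d : ℕ) (hd : 2 ≤ d)
    (A : EuclideanSpace ℝ (Fin d) → EuclideanSpace ℝ (Fin d))
    (hA : ContDiff ℝ (⊤ : ℕ∞) A) (hAbd : ∃ M : ℝ, ∀ x, ‖A x‖ ≤ M)
    (hBne : ∃ (x : EuclideanSpace ℝ (Fin d)) (j k : Fin d),
      fderiv ℝ (fun y => A y k) x (EuclideanSpace.single j (1:ℝ))
      - fderiv ℝ (fun y => A y j) x (EuclideanSpace.single k (1:ℝ)) ≠ 0)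
    (s : ℝ) (hs : 0 ≤ s) :
    (1/2 : ℝ) < sInf {q : ℝ | ∃ ψ : EuclideanSpace ℝ (Fin d) → ℂ,
      ContDiff ℝ (⊤ : ℕ∞) ψ ∧ HasCompactSupport ψ ∧ ψ ≠ 0 ∧
      q = lsForm d A s ψ / ∫ y, ‖ψ y‖^2} := by
  obtain ⟨ε, hε, h⟩ : ∃ ε : ℝ, 0 < ε ∧ ∀ ψ : EuclideanSpace ℝ (Fin d) → ℂ,
      ContDiff ℝ (⊤ : ℕ∞) ψ → HasCompactSupport ψ →
      (1 / 2 + ε) * ∫ y, ‖ψ y‖ ^ 2 ≤ lsForm d A s ψ := by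
    obtain ⟨x, j, k, hB⟩ := hBne
    rcases hB.lt_or_gt with hB | hB
    · exact exists_lsForm_gap hd hA s (x := x) (j := k) (k := j) (sub_pos.2 (sub_neg.1 hB))
    · exact exists_lsForm_gap hd hA s hB
  refine lt_of_lt_of_le (lt_add_of_pos_right _ hε) (le_csInf ?_ ?_)
  · let χ : ContDiffBump (0 : EuclideanSpace ℝ (Fin d)) := ⟨1, 2, one_pos, one_lt_two⟩
    refine ⟨_, fun y => (χ y : ℂ), Complex.ofRealCLM.contDiff.comp χ.contDiff,
      χ.hasCompactSupport.comp_left (g := Complex.ofReal) rfl, Function.ne_iff.2 ⟨0, ?_⟩, rfl⟩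
    have h1 : χ 0 = 1 := χ.one_of_mem_closedBall (by simp [χ])
    simp [h1]
  · rintro q ⟨ψ, hψ, hcψ, h0, rfl⟩
    rw [le_div_iff₀ (integral_norm_sq_pos hψ.continuous hcψ h0)]
    exact h ψ hψ hcψ
end
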